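/- arXiv:1110.1144 — 2 statements merged into one kernel-verified Lean document; each statement's English description precedes it below -/
import Mathlib

section
/- The edge set of every simple graph on n vertices can be covered by at most n − 1 subgraphs, each of which is a cycle or a single edge. -/
/-!
Suppose that `s` is to be joined to an end `v` of a path. If the path already passes through `s`,
deleting the edge by which it leaves `s` towards `v` makes it a path again, which now ends at the
other endpoint `w` of the deleted edge. The edge `sw` is restored by joining `s` to an end at `w`
of some path, and so on. When edges are added one at a time, each joining some `s` to a vertex that
is an end twice, after which `s` is an end twice, this shows that every graph on `n` vertices
decomposes into `n` paths such that every vertex is an end of one of them.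

Order the vertices by their distance to a representative of their component, the *root*, and let the
parent of any other vertex be its least neighbour. Decompose `G` without the edges from vertices to
their parents into `n` paths as above, and then join each `s`, in decreasing order, to all its
children by the same rerouting. A path avoiding `s` both of whose ends get joined to `s` becomes a
cycle or an edge; every other path stays a path. A vertex ceases to be an end once it is joined to
its parent, so finally all ends are roots. Since a component has only one root, the paths that are
left are single vertices, and there is at least one for each component. Hence at most `n - 1` of
the `n` paths have become cycles or edges.
-/

namespace Pyber

variable {V : Type*} {l l₁ l₂ : List V} {a b s w : V}

section Consecutive

/-- `a` and `b` are adjacent entries of the list `l`, in either order: when `l` is the support of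
a walk, `s(a, b)` is an edge of that walk. -/
def Consecutive (l : List V) (a b : V) : Prop := [a, b] <:+: l ∨ [b, a] <:+: l

theorem Consecutive.symm (h : Consecutive l a b) : Consecutive l b a := Or.symm h

theorem Consecutive.mem_left (h : Consecutive l a b) : a ∈ l := by
  rcases h with h | h <;> exact h.subset (by simp)

theorem Consecutive.ne (h : Consecutive l a b) (hl : l.Nodup) : a ≠ b := by
  rcases h with h | h <;> have := hl.sublist h.sublist <;> grind

theorem not_consecutive_nil : ¬ Consecutive [] a b := by simp [Consecutive]

theorem consecutive_reverse : Consecutive l.reverse a b ↔ Consecutive l a b := by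
  have infix_reverse (a b : V) : [a, b] <:+: l.reverse ↔ [b, a] <:+: l := by
    rw [← List.reverse_infix]; simp
  rw [Consecutive, infix_reverse, infix_reverse, or_comm, Consecutive]

theorem consecutive_cons {c : V} : Consecutive (c :: l) a b ↔
    Consecutive l a b ∨ (a = c ∧ l.head? = some b) ∨ (b = c ∧ l.head? = some a) := by
  have infix_cons (a b : V) :
      [a, b] <:+: c :: l ↔ (a = c ∧ l.head? = some b) ∨ [a, b] <:+: l := by
    rw [List.infix_cons_iff, List.cons_prefix_cons]
    cases l <;> simp [eq_comm (a := b)]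
  unfold Consecutive
  rw [infix_cons, infix_cons]
  tauto

theorem not_consecutive_singleton {c : V} : ¬ Consecutive [c] a b := by
  simp [consecutive_cons, not_consecutive_nil]

theorem consecutive_append : Consecutive (l₁ ++ l₂) a b ↔
    Consecutive l₁ a b ∨ Consecutive l₂ a b ∨
      (l₁.getLast? = some a ∧ l₂.head? = some b) ∨
      (l₁.getLast? = some b ∧ l₂.head? = some a) := by
  induction l₁ with
  | nil => simp [not_consecutive_nil]
  | cons c l ih =>
    rw [List.cons_append, consecutive_cons, ih, consecutive_cons]
    cases l with
    | nil =>
      simp only [List.nil_append, not_consecutive_nil, List.getLast?_nil, List.head?_nil,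
        List.getLast?_singleton, Option.some.injEq, reduceCtorEq]
      grind
    | cons d l => simp only [List.cons_append, List.head?_cons, List.getLast?_cons_cons]; tauto

end Consecutive

section Path

variable {e e' : Bool} {A A' : Bool → List V}

/-- The list of vertices of a path, possibly with a single vertex. -/
structure IsPathList (l : List V) : Prop where
  ne_nil : l ≠ []
  nodup : l.Nodup

/-- The first (`e = false`) or last (`e = true`) entry of `l`. -/
def endpoint (l : List V) (e : Bool) : Option V := if e then l.getLast? else l.head?

theorem IsPathList.exists_endpoint (hl : IsPathList l) (e : Bool) :
    ∃ v, endpoint l e = some v := by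
  cases e
  · exact ⟨_, List.head?_eq_some_head hl.ne_nil⟩
  · exact ⟨_, List.getLast?_eq_some_getLast hl.ne_nil⟩

theorem mem_of_endpoint (h : endpoint l e = some a) : a ∈ l := by
  cases e
  · exact List.mem_of_head? h
  · exact List.mem_of_getLast? h

/-- The list running through `s` with the arms `A false` and `A true` on its two sides, both arms
being read outwards from `s`. -/
def joinArms (s : V) (A : Bool → List V) : List V := (A false).reverse ++ s :: A true

theorem endpoint_joinArms : endpoint (joinArms s A) e = some ((A e).getLast?.getD s) := by
  cases e
  · cases h : (A false).getLast? <;> simp [endpoint, joinArms, h]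
  · simp [endpoint, joinArms, List.getLast?_append, List.getLast?_cons]

theorem consecutive_joinArms :
    Consecutive (joinArms s A) a b ↔ ∃ e, Consecutive (s :: A e) a b := by
  simp only [joinArms, consecutive_append, consecutive_reverse, consecutive_cons,
    List.getLast?_reverse, List.head?_cons, Option.some.injEq, Bool.exists_bool, eq_comm (b := s)]
  tauto

theorem joinArms_perm (h : ∀ e, (A e).Perm (A' e)) : (joinArms s A).Perm (joinArms s A') :=
  (((A false).reverse_perm.trans (h false)).trans (A' false).reverse_perm.symm).append
    ((h true).cons s)

open Classical in
/-- The part of `l` strictly beyond `s` towards the endpoint `e`, read outwards from `s`; it is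
empty when `s` is not in `l`. -/
noncomputable def arm (s : V) (l : List V) (e : Bool) : List V :=
  ((if e then l else l.reverse).dropWhile (· ≠ s)).tail

theorem arm_of_notMem (hs : s ∉ l) : arm s l e = [] := by
  classical
  have dropWhile_eq_nil (l : List V) (hs : s ∉ l) : l.dropWhile (· ≠ s) = [] :=
    List.dropWhile_eq_nil_iff.2 fun v hv => decide_eq_true (ne_of_mem_of_not_mem hv hs)
  rw [arm, dropWhile_eq_nil _ (by cases e <;> simpa using hs), List.tail_nil]

theorem arm_joinArms (hs : ∀ e, s ∉ A e) : arm s (joinArms s A) e = A e := by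
  classical
  have dropWhile_eq (e : Bool) (l : List V) :
      ((A e).reverse ++ s :: l).dropWhile (fun v => !decide (v = s)) = s :: l := by
    rw [List.dropWhile_append_of_pos (by grind [hs e])]
    simp
  cases e <;> simp [arm, joinArms, dropWhile_eq]

theorem exists_eq_joinArms (hl : l.Nodup) (hs : s ∈ l) :
    ∃ A : Bool → List V, (∀ e, s ∉ A e) ∧ l = joinArms s A := by
  obtain ⟨L, R, rfl⟩ := List.append_of_mem hs
  have hLR : s ∉ L ++ R := (List.nodup_cons.1 (List.nodup_middle.1 hl)).1
  refine ⟨fun e => if e then R else L.reverse, ?_, ?_⟩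
  · rw [Bool.forall_bool]; simpa using hLR
  · simp [joinArms]

/-- The neighbour of `s` on `l` in the direction of the endpoint `e`. -/
noncomputable def toward (s : V) (l : List V) (e : Bool) : Option V := (arm s l e).head?

theorem consecutive_cons_self (hs : s ∉ l) : Consecutive (s :: l) s w ↔ l.head? = some w := by
  have h₁ : ¬ Consecutive l s w := fun h => hs h.mem_left
  have h₂ : l.head? ≠ some s := fun h => hs (List.mem_of_head? h)
  simp [consecutive_cons, h₁, h₂]

theorem consecutive_cons_of_ne (ha : a ≠ s) (hb : b ≠ s) :
    Consecutive (s :: l) a b ↔ Consecutive l a b := by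
  simp [consecutive_cons, ha, hb]

theorem consecutive_iff_exists_toward (hl : l.Nodup) :
    Consecutive l s w ↔ ∃ e, toward s l e = some w := by
  by_cases hs : s ∈ l
  · obtain ⟨A, hA, rfl⟩ := exists_eq_joinArms hl hs
    simp only [consecutive_joinArms, consecutive_cons_self (hA _), toward, arm_joinArms hA]
  · simpa [toward, arm_of_notMem hs] using fun h : Consecutive l s w => hs h.mem_left

theorem toward_injective (hl : l.Nodup) (h : toward s l e = some w) (h' : toward s l e' = some w) :
    e = e' := by
  by_cases hs : s ∈ l
  · obtain ⟨A, hA, rfl⟩ := exists_eq_joinArms hl hs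
    have disjoint : ∀ v ∈ A false, v ∉ A true := by
      simp only [joinArms, List.nodup_append, List.mem_reverse, List.mem_cons] at hl
      exact fun v hv hv' => hl.2.2 v hv v (Or.inr hv') rfl
    rw [toward, arm_joinArms hA] at h h'
    have := List.mem_of_head? h
    have := List.mem_of_head? h'
    cases e <;> cases e' <;> grind
  · simp [toward, arm_of_notMem hs] at h

end Path

section Splice

variable {x : Set Bool} {e : Bool}

open Classical in
/-- Join `s` to the endpoints `e ∈ x` of the path `l`. If `s` lies on `l`, the edge by which `l`
leaves `s` towards such an endpoint is deleted, which amounts to reversing that arm of `l`. -/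
noncomputable def splice (s : V) (x : Set Bool) (l : List V) : List V :=
  if s ∈ l then joinArms s fun e => if e ∈ x then (arm s l e).reverse else arm s l e
  else (if false ∈ x then [s] else []) ++ l ++ (if true ∈ x then [s] else [])

open Classical in
theorem splice_joinArms {A : Bool → List V} (hA : ∀ e, s ∉ A e) :
    splice s x (joinArms s A) = joinArms s fun e => if e ∈ x then (A e).reverse else A e := by
  simp only [splice, arm_joinArms hA, if_pos (show s ∈ joinArms s A by simp [joinArms])]

open Classical in
theorem splice_of_notMem (hs : s ∉ l) : splice s x l =
    (if false ∈ x then [s] else []) ++ l ++ (if true ∈ x then [s] else []) := if_neg hs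

/-- Joining `s` to both endpoints of a path that avoids it closes the path up to a cycle. -/
def ClosesUp (s : V) (x : Set Bool) (l : List V) : Prop := s ∉ l ∧ ∀ e, e ∈ x

theorem ClosesUp.splice_eq (h : ClosesUp s x l) : splice s x l = s :: (l ++ [s]) := by
  simp [splice_of_notMem h.1, h.2]

theorem consecutive_splice_of_ne (hl : l.Nodup) (ha : a ≠ s) (hb : b ≠ s) :
    Consecutive (splice s x l) a b ↔ Consecutive l a b := by
  by_cases hs : s ∈ l
  · obtain ⟨A, hA, rfl⟩ := exists_eq_joinArms hl hs
    simp only [splice_joinArms hA, consecutive_joinArms, consecutive_cons_of_ne ha hb]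
    refine exists_congr fun e => ?_
    split_ifs <;> simp only [consecutive_reverse]
  · rw [splice_of_notMem hs]
    split_ifs <;> simp [consecutive_append, not_consecutive_nil,
      consecutive_cons_of_ne, ha, hb, ha.symm, hb.symm]

open Classical in
theorem consecutive_splice (hl : IsPathList l) (hx : ∀ e ∈ x, endpoint l e ≠ some s) :
    Consecutive (splice s x l) s w ↔
      ∃ e, if e ∈ x then endpoint l e = some w else toward s l e = some w := by
  by_cases hs : s ∈ l
  · obtain ⟨A, hA, rfl⟩ := exists_eq_joinArms hl.nodup hs
    simp only [splice_joinArms hA, consecutive_joinArms]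
    refine exists_congr fun e => ?_
    split_ifs with he
    · have := hx e he
      rw [endpoint_joinArms] at this ⊢
      rw [consecutive_cons_self (by simpa using hA e), List.head?_reverse]
      cases h : (A e).getLast? <;> simp_all
    · rw [consecutive_cons_self (hA e), toward, arm_joinArms hA]
  · have h₀ : ¬ Consecutive l s w := fun h => hs h.mem_left
    have (e : Bool) : endpoint l e ≠ some s := fun h => hs (mem_of_endpoint h)
    obtain ⟨u, hu⟩ := hl.exists_endpoint false
    obtain ⟨v, hv⟩ := hl.exists_endpoint true
    simp only [splice_of_notMem hs, Bool.exists_bool, toward, arm_of_notMem hs]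
    simp only [endpoint, Bool.false_eq_true, if_false, if_true] at *
    split_ifs <;> simp_all [consecutive_append, not_consecutive_nil, consecutive_cons, or_comm]

theorem isPathList_splice (hl : IsPathList l) (h : ¬ ClosesUp s x l) :
    IsPathList (splice s x l) := by
  by_cases hs : s ∈ l
  · obtain ⟨A, hA, rfl⟩ := exists_eq_joinArms hl.nodup hs
    rw [splice_joinArms hA]
    refine ⟨by simp [joinArms], ?_⟩
    rw [(joinArms_perm (A' := A) fun e => ?_).nodup_iff]
    · exact hl.nodup
    · split_ifs
      exacts [(A e).reverse_perm, .rfl]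
  · have := hl.ne_nil
    have := hl.nodup
    simp only [ClosesUp, hs, not_false_eq_true, true_and, Bool.forall_bool] at h
    rw [splice_of_notMem hs]
    constructor
    · simp_all
    · split_ifs <;> grind [List.nodup_append]

open Classical in
theorem endpoint_splice (hl : IsPathList l) (hx : ∀ e ∈ x, endpoint l e ≠ some s)
    (h : ¬ ClosesUp s x l) :
    endpoint (splice s x l) e =
      if e ∈ x then some ((toward s l e).getD s) else endpoint l e := by
  by_cases hs : s ∈ l
  · obtain ⟨A, hA, rfl⟩ := exists_eq_joinArms hl.nodup hs
    rw [splice_joinArms hA, endpoint_joinArms, endpoint_joinArms, toward, arm_joinArms hA]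
    split_ifs <;> simp only [List.getLast?_reverse]
  · obtain ⟨u, hu⟩ := hl.exists_endpoint false
    obtain ⟨v, hv⟩ := hl.exists_endpoint true
    simp only [ClosesUp, hs, not_false_eq_true, true_and, Bool.forall_bool] at h
    rw [splice_of_notMem hs, toward, arm_of_notMem hs]
    cases e <;> split_ifs <;> simp_all [endpoint, List.getLast?_append, List.getLast?_cons]

end Splice

section Reroute

variable {ι : Type*} (P : ι → List V) (s : V) (D B : Set (ι × Bool))

/-- The ends at which a family of paths is joined to `s` so as to gain the edges from `s` to the
ends in `B`: each edge by which a path leaves `s` towards such an end is deleted, and is restored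
by joining to `s` the ends in `D` at its other endpoint. -/
inductive Rerouted : ι × Bool → Prop
  | base {e : ι × Bool} (h : e ∈ B) : Rerouted e
  | step {e c : ι × Bool} {w : V} (h : Rerouted e) (h_toward : toward s (P e.1) e.2 = some w)
      (h_mem : c ∈ D) (h_end : endpoint (P c.1) c.2 = some w) : Rerouted c

/-- The family of paths `P` joined to `s` at all ends in `Rerouted P s D B`. -/
noncomputable def reroute (i : ι) : List V := splice s {e | Rerouted P s D B (i, e)} (P i)

variable {P s D B} {i : ι} {e : Bool}

theorem Rerouted.endpoint_ne (hP : ∀ i, IsPathList (P i))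
    (hB : ∀ e ∈ B, endpoint (P e.1) e.2 ≠ some s) {e : ι × Bool} (he : Rerouted P s D B e) :
    endpoint (P e.1) e.2 ≠ some s := by
  cases he with
  | base h => exact hB e h
  | @step e' _ w _ h_toward _ h_end =>
    have := (consecutive_iff_exists_toward (hP e'.1).nodup).2 ⟨_, h_toward⟩
    rw [h_end]
    exact fun h => this.ne (hP e'.1).nodup (Option.some.inj h).symm

theorem consecutive_reroute_of_ne (hP : ∀ i, IsPathList (P i)) (ha : a ≠ s) (hb : b ≠ s) :
    Consecutive (reroute P s D B i) a b ↔ Consecutive (P i) a b :=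
  consecutive_splice_of_ne (hP i).nodup ha hb

open Classical in
theorem consecutive_reroute (hP : ∀ i, IsPathList (P i))
    (hB : ∀ e ∈ B, endpoint (P e.1) e.2 ≠ some s) :
    Consecutive (reroute P s D B i) s w ↔
      ∃ e, if Rerouted P s D B (i, e) then endpoint (P i) e = some w
        else toward s (P i) e = some w :=
  consecutive_splice (hP i) fun _ he => he.endpoint_ne hP hB

theorem exists_consecutive_reroute (hP : ∀ i, IsPathList (P i))
    (hB : ∀ e ∈ B, endpoint (P e.1) e.2 ≠ some s)
    (hD : ∀ i w, Consecutive (P i) s w → ∃ e ∈ D, endpoint (P e.1) e.2 = some w) :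
    (∃ i, Consecutive (reroute P s D B i) s w) ↔
      (∃ i, Consecutive (P i) s w) ∨ ∃ e ∈ B, endpoint (P e.1) e.2 = some w := by
  classical
  have consecutive_of_toward {i e} (h : toward s (P i) e = some w) : Consecutive (P i) s w :=
    (consecutive_iff_exists_toward (hP i).nodup).2 ⟨e, h⟩
  simp only [consecutive_reroute hP hB]
  constructor
  · rintro ⟨i, e, h⟩
    split_ifs at h with he
    · cases he with
      | base hb => exact .inr ⟨_, hb, h⟩
      | step _ h_toward _ h_end =>
        exact .inl ⟨_, consecutive_of_toward (h_toward.trans (h_end.symm.trans h))⟩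
    · exact .inl ⟨i, consecutive_of_toward h⟩
  · have join {e : ι × Bool} (he : Rerouted P s D B e) (hw : endpoint (P e.1) e.2 = some w) :
        ∃ i e, if Rerouted P s D B (i, e) then endpoint (P i) e = some w
          else toward s (P i) e = some w := ⟨e.1, e.2, by rwa [if_pos he]⟩
    rintro (⟨i, h⟩ | ⟨e, he, hw⟩)
    · obtain ⟨e, h_toward⟩ := (consecutive_iff_exists_toward (hP i).nodup).1 h
      by_cases he : Rerouted P s D B (i, e)
      · obtain ⟨e', h_mem, h_end⟩ := hD i w h
        exact join (he.step h_toward h_mem h_end) h_end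
      · exact ⟨i, e, by rwa [if_neg he]⟩
    · exact join (.base he) hw

open Classical in
theorem endpoint_reroute (hP : ∀ i, IsPathList (P i))
    (hB : ∀ e ∈ B, endpoint (P e.1) e.2 ≠ some s)
    (h : ¬ ClosesUp s {e | Rerouted P s D B (i, e)} (P i)) :
    endpoint (reroute P s D B i) e =
      if Rerouted P s D B (i, e) then some ((toward s (P i) e).getD s) else endpoint (P i) e :=
  endpoint_splice (hP i) (fun _ he => he.endpoint_ne hP hB) h

end Reroute

section Decomposition

variable {ι : Type*} {P : ι → List V} {H : SimpleGraph V}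

/-- The paths `P i` decompose the edge set of `H`. -/
structure IsPathDecomposition (P : ι → List V) (H : SimpleGraph V) : Prop where
  isPathList (i : ι) : IsPathList (P i)
  exists_consecutive_iff (a b : V) : (∃ i, Consecutive (P i) a b) ↔ H.Adj a b
  index_eq {i j : ι} {a b : V} : Consecutive (P i) a b → Consecutive (P j) a b → i = j

theorem IsPathDecomposition.consecutive_of_toward (hP : IsPathDecomposition P H) {e : ι × Bool}
    (h : toward s (P e.1) e.2 = some w) : Consecutive (P e.1) s w :=
  (consecutive_iff_exists_toward (hP.isPathList _).nodup).2 ⟨_, h⟩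

theorem IsPathDecomposition.eq_of_toward (hP : IsPathDecomposition P H) {e e' : ι × Bool}
    (he : toward s (P e.1) e.2 = some w) (he' : toward s (P e'.1) e'.2 = some w) : e = e' := by
  obtain ⟨i, e⟩ := e
  obtain ⟨j, e'⟩ := e'
  obtain rfl : i = j := hP.index_eq (hP.consecutive_of_toward he) (hP.consecutive_of_toward he')
  exact congrArg _ (toward_injective (hP.isPathList i).nodup he he')

-- Following `g` from `x` exhausts `X`, so it must stop, and it can stop only once.
theorem existsUnique_eq_none {E : Type*} [Finite E] {X : Set E} {x : E} {g : E → Option E}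
    (hX : ∀ c, c ∈ X ↔ c = x ∨ ∃ a ∈ X, g a = some c) (hx : ∀ a, g a ≠ some x)
    (hg : ∀ a b c, g a = some c → g b = some c → a = b) : ∃! a, a ∈ X ∧ g a = none := by
  have mapsTo (a : X) : (g a).getD x ∈ X := by
    cases h : g a with
    | none => exact (hX x).2 (.inl rfl)
    | some c => exact (hX c).2 (.inr ⟨a, a.2, h⟩)
  let f (a : X) : X := ⟨(g a).getD x, mapsTo a⟩
  have exists_none : ∃ a : X, g a = none := by
    by_contra! h
    have f_injective : f.Injective := fun a b hab => by
      obtain ⟨c, hc⟩ := Option.ne_none_iff_exists'.1 (h a)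
      obtain ⟨c', hc'⟩ := Option.ne_none_iff_exists'.1 (h b)
      have : c = c' := by simpa [f, hc, hc'] using hab
      exact Subtype.ext (hg a b c hc (this ▸ hc'))
    obtain ⟨a, ha⟩ := Finite.surjective_of_injective f_injective ⟨x, (hX x).2 (.inl rfl)⟩
    obtain ⟨c, hc⟩ := Option.ne_none_iff_exists'.1 (h a)
    have : c = x := by simpa [f, hc] using ha
    exact hx a (this ▸ hc)
  obtain ⟨t, ht⟩ := exists_none
  have f_surjective : f.Surjective := by
    rintro ⟨c, hc⟩
    obtain rfl | ⟨a, ha, hac⟩ := (hX c).1 hc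
    · exact ⟨t, by simp [f, ht]⟩
    · exact ⟨⟨a, ha⟩, by simp [f, hac]⟩
  refine ⟨t, ⟨t.2, ht⟩, fun u ⟨hu, hu'⟩ => ?_⟩
  have : f ⟨u, hu⟩ = f t := by simp [f, hu', ht]
  exact congrArg Subtype.val (Finite.injective_iff_surjective.2 f_surjective this)

section AddEdge

variable {d : V → ι × Bool} {x : ι × Bool} {z : V}

theorem rerouted_range_iff (hd : ∀ v, endpoint (P (d v).1) (d v).2 = some v) {c : ι × Bool} :
    Rerouted P s (Set.range d) {x} c ↔
      c = x ∨ ∃ e, Rerouted P s (Set.range d) {x} e ∧ (toward s (P e.1) e.2).map d = some c := by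
  constructor
  · rintro (h | ⟨he, h_toward, ⟨v, rfl⟩, h_end⟩)
    · exact .inl h
    · obtain rfl := Option.some.inj ((hd v).symm.trans h_end)
      exact .inr ⟨_, he, by rw [h_toward, Option.map_some]⟩
  · rintro (rfl | ⟨e, he, h⟩)
    · exact .base rfl
    · obtain ⟨w, h_toward, rfl⟩ := Option.map_eq_some_iff.1 h
      exact he.step h_toward (Set.mem_range_self w) (hd w)

/-- The data for adding the edge from `s` to `z` to a path decomposition of `H`: an end `d v` at
each vertex `v`, and a second end `x` at `z`. -/
structure IsEdgeAddition (P : ι → List V) (H : SimpleGraph V) (s z : V) (d : V → ι × Bool)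
    (x : ι × Bool) : Prop where
  isPathDecomposition : IsPathDecomposition P H
  ne : s ≠ z
  not_adj : ¬ H.Adj s z
  endpoint_eq (v : V) : endpoint (P (d v).1) (d v).2 = some v
  endpoint_eq' : endpoint (P x.1) x.2 = some z
  notMem_range : x ∉ Set.range d

namespace IsEdgeAddition

variable (h : IsEdgeAddition P H s z d x)
include h

theorem injective : d.Injective := fun v w hvw =>
  Option.some.inj ((h.endpoint_eq v).symm.trans (hvw ▸ h.endpoint_eq w))

theorem endpoint_ne_of_mem : ∀ e ∈ ({x} : Set (ι × Bool)), endpoint (P e.1) e.2 ≠ some s := by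
  rintro _ rfl
  rw [h.endpoint_eq']
  exact fun hzs => h.ne (Option.some.inj hzs).symm

theorem eq_or_exists_toward_eq {e : ι × Bool} (he : Rerouted P s (Set.range d) {x} e)
    (hw : endpoint (P e.1) e.2 = some w) : (e = x ∧ w = z) ∨
      (e = d w ∧ ∃ e', Rerouted P s (Set.range d) {x} e' ∧ toward s (P e'.1) e'.2 = some w) := by
  obtain rfl | ⟨e', he', h_toward⟩ := (rerouted_range_iff h.endpoint_eq).1 he
  · exact .inl ⟨rfl, Option.some.inj (hw.symm.trans h.endpoint_eq')⟩
  · obtain ⟨v, hv, rfl⟩ := Option.map_eq_some_iff.1 h_toward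
    obtain rfl := Option.some.inj ((h.endpoint_eq v).symm.trans hw)
    exact .inr ⟨rfl, e', he', hv⟩

theorem toward_ne (e : ι × Bool) : toward s (P e.1) e.2 ≠ some z := fun h_toward =>
  h.not_adj ((h.isPathDecomposition.exists_consecutive_iff s z).1
    ⟨e.1, h.isPathDecomposition.consecutive_of_toward h_toward⟩)

theorem eq_of_rerouted_of_endpoint_eq {e e' : ι × Bool}
    (he : Rerouted P s (Set.range d) {x} e) (he' : Rerouted P s (Set.range d) {x} e')
    (hw : endpoint (P e.1) e.2 = some w) (hw' : endpoint (P e'.1) e'.2 = some w) : e = e' := by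
  obtain ⟨hx, rfl⟩ | ⟨hd, a, -, ha⟩ := h.eq_or_exists_toward_eq he hw <;>
    obtain ⟨hx', hz⟩ | ⟨hd', b, -, hb⟩ := h.eq_or_exists_toward_eq he' hw'
  · rw [hx, hx']
  · exact absurd hb (h.toward_ne b)
  · exact absurd (hz ▸ ha) (h.toward_ne a)
  · rw [hd, hd']

theorem rerouted_of_toward_eq {e e' : ι × Bool} (he : Rerouted P s (Set.range d) {x} e)
    (hw : endpoint (P e.1) e.2 = some w) (h_toward : toward s (P e'.1) e'.2 = some w) :
    Rerouted P s (Set.range d) {x} e' := by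
  obtain ⟨rfl, rfl⟩ | ⟨rfl, a, ha, ha'⟩ := h.eq_or_exists_toward_eq he hw
  · exact absurd h_toward (h.toward_ne e')
  · rwa [h.isPathDecomposition.eq_of_toward h_toward ha']

theorem index_eq_of_consecutive {i j : ι} (hi : Consecutive (reroute P s (Set.range d) {x} i) a b)
    (hj : Consecutive (reroute P s (Set.range d) {x} j) a b) : i = j := by
  have hP := h.isPathDecomposition
  wlog hb : b ≠ s generalizing a b
  · by_cases ha : a = s
    · rw [not_not.1 hb, ha, consecutive_reroute hP.isPathList h.endpoint_ne_of_mem] at hi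
      obtain ⟨e, he⟩ := hi
      split_ifs at he with he'
      · exact absurd he (he'.endpoint_ne hP.isPathList h.endpoint_ne_of_mem)
      · exact absurd rfl ((hP.consecutive_of_toward (e := (i, e)) he).ne (hP.isPathList i).nodup)
    · exact this hi.symm hj.symm ha
  by_cases ha : a = s
  · rw [ha, consecutive_reroute hP.isPathList h.endpoint_ne_of_mem] at hi hj
    obtain ⟨e, he⟩ := hi
    obtain ⟨e', he'⟩ := hj
    suffices (i, e) = (j, e') from congrArg Prod.fst this
    split_ifs at he he' with hX hX' hX'
    · exact h.eq_of_rerouted_of_endpoint_eq hX hX' he he'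
    · exact absurd (h.rerouted_of_toward_eq hX he he') hX'
    · exact absurd (h.rerouted_of_toward_eq hX' he' he) hX
    · exact hP.eq_of_toward he he'
  · rw [consecutive_reroute_of_ne hP.isPathList ha hb] at hi hj
    exact hP.index_eq hi hj

theorem exists_consecutive_reroute_iff :
    (∃ i, Consecutive (reroute P s (Set.range d) {x} i) a b) ↔
      (H ⊔ SimpleGraph.edge s z).Adj a b := by
  have hP := h.isPathDecomposition
  have at_s (w : V) : (∃ i, Consecutive (reroute P s (Set.range d) {x} i) s w) ↔
      H.Adj s w ∨ z = w := by
    rw [exists_consecutive_reroute hP.isPathList h.endpoint_ne_of_mem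
      fun i w _ => ⟨d w, Set.mem_range_self w, h.endpoint_eq w⟩, hP.exists_consecutive_iff]
    simp [h.endpoint_eq']
  have hsz := h.ne
  rw [SimpleGraph.sup_adj, SimpleGraph.edge_adj]
  by_cases ha : a = s
  · rw [ha, at_s]
    grind
  by_cases hb : b = s
  · rw [hb, exists_congr fun i => ⟨Consecutive.symm, Consecutive.symm⟩, at_s, H.adj_comm]
    grind
  · simp only [consecutive_reroute_of_ne hP.isPathList ha hb, hP.exists_consecutive_iff]
    grind

variable [Finite ι]

theorem existsUnique_rerouted_toward_eq_none :
    ∃! e, Rerouted P s (Set.range d) {x} e ∧ toward s (P e.1) e.2 = none := by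
  have := existsUnique_eq_none (X := {e | Rerouted P s (Set.range d) {x} e}) (x := x)
    (g := fun e => (toward s (P e.1) e.2).map d) (fun c => rerouted_range_iff h.endpoint_eq)
    (fun a ha => h.notMem_range ?_) (fun a b c ha hb => ?_)
  · simpa only [Set.mem_ofPred_eq, Option.map_eq_none_iff] using this
  · obtain ⟨w, -, hw⟩ := Option.map_eq_some_iff.1 ha
    exact ⟨w, hw⟩
  · obtain ⟨w, hw, rfl⟩ := Option.map_eq_some_iff.1 ha
    obtain ⟨w', hw', h_eq⟩ := Option.map_eq_some_iff.1 hb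
    rw [h.injective h_eq] at hw'
    exact h.isPathDecomposition.eq_of_toward hw hw'

theorem not_closesUp (i : ι) : ¬ ClosesUp s {e | Rerouted P s (Set.range d) {x} (i, e)} (P i) := by
  rintro ⟨hs, h_all⟩
  have toward_eq_none (e : Bool) : toward s (P i) e = none := by
    rw [toward, arm_of_notMem hs, List.head?_nil]
  have : (i, false) = (i, true) := h.existsUnique_rerouted_toward_eq_none.unique
    ⟨h_all false, toward_eq_none false⟩ ⟨h_all true, toward_eq_none true⟩
  simp at this

theorem isPathDecomposition_reroute :
    IsPathDecomposition (reroute P s (Set.range d) {x}) (H ⊔ SimpleGraph.edge s z) where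
  isPathList i := isPathList_splice (h.isPathDecomposition.isPathList i) (h.not_closesUp i)
  exists_consecutive_iff _ _ := h.exists_consecutive_reroute_iff
  index_eq := h.index_eq_of_consecutive

open Classical in
theorem endpoint_reroute (e : ι × Bool) : endpoint (reroute P s (Set.range d) {x} e.1) e.2 =
    if Rerouted P s (Set.range d) {x} e then some ((toward s (P e.1) e.2).getD s)
    else endpoint (P e.1) e.2 :=
  Pyber.endpoint_reroute h.isPathDecomposition.isPathList h.endpoint_ne_of_mem
    (h.not_closesUp e.1)

theorem exists_endpoint_reroute_eq (v : V) :
    ∃ e : ι × Bool, endpoint (reroute P s (Set.range d) {x} e.1) e.2 = some v := by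
  simp only [h.endpoint_reroute]
  by_cases hv : Rerouted P s (Set.range d) {x} (d v)
  · obtain ⟨hvx, -⟩ | ⟨-, e, he, h_toward⟩ := h.eq_or_exists_toward_eq hv (h.endpoint_eq v)
    · exact absurd ⟨v, hvx⟩ h.notMem_range
    · exact ⟨e, by rw [if_pos he, h_toward, Option.getD_some]⟩
  · exact ⟨d v, by rw [if_neg hv, h.endpoint_eq]⟩

theorem exists_ne_endpoint_reroute_eq :
    ∃ e e' : ι × Bool, e ≠ e' ∧ endpoint (reroute P s (Set.range d) {x} e.1) e.2 = some s ∧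
      endpoint (reroute P s (Set.range d) {x} e'.1) e'.2 = some s := by
  simp only [h.endpoint_reroute]
  obtain ⟨e, ⟨he, h_toward⟩, -⟩ := h.existsUnique_rerouted_toward_eq_none
  have hds : ¬ Rerouted P s (Set.range d) {x} (d s) := fun hs =>
    hs.endpoint_ne h.isPathDecomposition.isPathList h.endpoint_ne_of_mem (h.endpoint_eq s)
  refine ⟨e, d s, fun h_eq => hds (h_eq ▸ he), ?_, ?_⟩
  · rw [if_pos he, h_toward, Option.getD_none]
  · rw [if_neg hds, h.endpoint_eq]

end IsEdgeAddition

end AddEdge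

theorem eq_singleton_of_forall_not_consecutive (hl : IsPathList l) (hs : s ∈ l)
    (h : ∀ w, ¬ Consecutive l s w) : l = [s] := by
  obtain ⟨A, hA, rfl⟩ := exists_eq_joinArms hl.nodup hs
  have arm_eq_nil (e : Bool) : A e = [] := by
    refine List.head?_eq_none_iff.1 (Option.eq_none_iff_forall_ne_some.2 fun w hw => h w ?_)
    rw [consecutive_iff_exists_toward hl.nodup]
    exact ⟨e, by rwa [toward, arm_joinArms hA]⟩
  simp [joinArms, arm_eq_nil]

/-- A path decomposition of `H` in which every vertex is an end of some path, and `u` at least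
twice. -/
structure IsSaturatedDecomposition (P : ι → List V) (H : SimpleGraph V) (u : V) : Prop
    extends IsPathDecomposition P H where
  exists_endpoint_eq (v : V) : ∃ e : ι × Bool, endpoint (P e.1) e.2 = some v
  exists_ne_endpoint_eq : ∃ e e' : ι × Bool, e ≠ e' ∧ endpoint (P e.1) e.2 = some u ∧
    endpoint (P e'.1) e'.2 = some u

theorem IsSaturatedDecomposition.exists_of_adj [Finite ι] {u z : V} (huz : H.Adj u z)
    (hP : IsSaturatedDecomposition P (H \ SimpleGraph.edge u z) z) :
    ∃ Q : ι → List V, IsSaturatedDecomposition Q H u := by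
  choose d hd using hP.exists_endpoint_eq
  obtain ⟨x, hx, hxz⟩ : ∃ x, x ≠ d z ∧ endpoint (P x.1) x.2 = some z := by
    obtain ⟨e, e', hne, he, he'⟩ := hP.exists_ne_endpoint_eq
    by_cases h : e = d z
    · exact ⟨e', h ▸ hne.symm, he'⟩
    · exact ⟨e, h, he⟩
  have addition : IsEdgeAddition P (H \ SimpleGraph.edge u z) u z d x :=
    { isPathDecomposition := hP.toIsPathDecomposition
      ne := huz.ne
      not_adj := by simp [SimpleGraph.edge_adj, huz.ne]
      endpoint_eq := hd
      endpoint_eq' := hxz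
      notMem_range := by
        rintro ⟨v, rfl⟩
        exact hx (congrArg d (Option.some.inj ((hd v).symm.trans hxz))) }
  have sup_eq : H \ SimpleGraph.edge u z ⊔ SimpleGraph.edge u z = H :=
    sdiff_sup_cancel ((SimpleGraph.edge_le_iff H).2 (.inr huz))
  exact ⟨_, sup_eq ▸ addition.isPathDecomposition_reroute, addition.exists_endpoint_reroute_eq,
    addition.exists_ne_endpoint_reroute_eq⟩

theorem exists_isSaturatedDecomposition [Finite V] (H : SimpleGraph V) (u : V) :
    ∃ P : V → List V, IsSaturatedDecomposition P H u := by
  induction H using WellFoundedLT.induction generalizing u with | _ H ih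
  have of_adj {u z : V} (huz : H.Adj u z) : ∃ P : V → List V, IsSaturatedDecomposition P H u := by
    have lt : H \ SimpleGraph.edge u z < H := by
      refine sdiff_lt ((SimpleGraph.edge_le_iff H).2 (.inr huz)) fun h => ?_
      have : (SimpleGraph.edge u z).Adj u z := by simp [SimpleGraph.edge_adj, huz.ne]
      rwa [h] at this
    obtain ⟨P, hP⟩ := ih _ lt z
    exact hP.exists_of_adj huz
  by_cases hu : ∃ z, H.Adj u z
  · exact of_adj hu.choose_spec
  by_cases hH : ∃ a b, H.Adj a b
  · obtain ⟨a, b, hab⟩ := hH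
    obtain ⟨P, hP⟩ := of_adj hab
    obtain ⟨⟨i, e⟩, he⟩ := hP.exists_endpoint_eq u
    have hPi : P i = [u] := eq_singleton_of_forall_not_consecutive (hP.isPathList i)
      (mem_of_endpoint he) fun w hw => hu ⟨w, (hP.exists_consecutive_iff u w).1 ⟨i, hw⟩⟩
    exact ⟨P, ⟨hP.toIsPathDecomposition, hP.exists_endpoint_eq, (i, false), (i, true), by simp,
      by simp [hPi, endpoint]⟩⟩
  · push Not at hH
    exact ⟨fun v => [v], ⟨⟨fun v => ⟨by simp, by simp⟩, by simp [not_consecutive_singleton, hH],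
      fun h => absurd h not_consecutive_singleton⟩, fun v => ⟨(v, false), rfl⟩,
      (u, false), (u, true), by simp, rfl, rfl⟩⟩

theorem exists_isPathDecomposition [Finite V] (H : SimpleGraph V) :
    ∃ P : V → List V, IsPathDecomposition P H ∧
      ∀ v, ∃ e : V × Bool, endpoint (P e.1) e.2 = some v := by
  cases isEmpty_or_nonempty V
  · exact ⟨fun _ => [], ⟨isEmptyElim, isEmptyElim, fun {i} => isEmptyElim i⟩, isEmptyElim⟩
  · obtain ⟨P, hP⟩ := exists_isSaturatedDecomposition H (Classical.arbitrary V)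
    exact ⟨P, hP.toIsPathDecomposition, hP.exists_endpoint_eq⟩

end Decomposition

section Walk

variable {G : SimpleGraph V}

theorem exists_walk_support_eq (h : ∀ a b, Consecutive l a b → G.Adj a b)
    (ha : endpoint l false = some a) (hb : endpoint l true = some b) :
    ∃ p : G.Walk a b, p.support = l := by
  have hl : l ≠ [] := List.ne_nil_of_mem (mem_of_endpoint ha)
  obtain rfl : l.head hl = a := (List.head_eq_iff_head?_eq_some hl).2 ha
  obtain rfl : l.getLast hl = b := (List.getLast_eq_iff_getLast?_eq_some hl).2 hb
  have isChain : l.IsChain G.Adj := List.isChain_iff_forall_rel_of_append_cons_cons.2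
    fun a b l₁ l₂ hab => h a b (.inl ⟨l₁, l₂, by simp [hab]⟩)
  exact ⟨.ofSupport l hl isChain, SimpleGraph.Walk.support_ofSupport hl isChain⟩

/-- A walk tracing a cycle, or a single edge. -/
def IsCycleOrEdge (p : Σ (u : V) (v : V), G.Walk u v) : Prop :=
  (∃ h : p.2.1 = p.1, (p.2.2.copy rfl h).IsCycle) ∨ p.2.2.length = 1

theorem exists_isCycleOrEdge (hl : l ≠ []) (h_nodup : (s :: l).Nodup)
    (h : ∀ a b, Consecutive (s :: (l ++ [s])) a b → G.Adj a b) :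
    ∃ p : Σ (u : V) (v : V), G.Walk u v, IsCycleOrEdge p ∧
      ∀ a b, s(a, b) ∈ p.2.2.edges ↔ Consecutive (s :: (l ++ [s])) a b := by
  obtain ⟨v, rfl⟩ | h_length : (∃ v, l = [v]) ∨ 2 ≤ l.length := by
    have := List.length_pos_iff.2 hl
    rw [← List.length_eq_one_iff]
    lia
  · have hsv : G.Adj s v := h s v (by simp [consecutive_cons])
    refine ⟨⟨s, v, hsv.toWalk⟩, .inr hsv.length_toWalk, fun a b => ?_⟩
    rw [← SimpleGraph.Walk.infix_support_iff_mem_edges]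
    change Consecutive _ a b ↔ _
    simp only [hsv.support_toWalk, List.singleton_append, consecutive_cons, not_consecutive_nil,
      List.head?_cons, List.head?_nil, Option.some.injEq, reduceCtorEq, and_false, false_or]
    tauto
  · obtain ⟨p, hp⟩ : ∃ p : G.Walk s s, p.support = s :: (l ++ [s]) :=
      exists_walk_support_eq h (by simp [endpoint]) (by simp [endpoint, List.getLast?_cons])
    have length_eq : p.length = l.length + 1 := by
      simpa [hp] using p.length_support.symm
    refine ⟨⟨s, s, p⟩, .inl ⟨rfl, ?_⟩, fun a b => ?_⟩
    · rw [SimpleGraph.Walk.copy_rfl_rfl, SimpleGraph.Walk.isCycle_iff_isPath_tail_and_le_length,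
        SimpleGraph.Walk.isPath_def, SimpleGraph.Walk.support_tail_of_not_nil, hp]
      · exact ⟨List.perm_append_singleton s l |>.nodup_iff.2 h_nodup, by lia⟩
      · rw [SimpleGraph.Walk.not_nil_iff_lt_length]
        lia
    · rw [← SimpleGraph.Walk.infix_support_iff_mem_edges, hp, Consecutive]

end Walk

section Linked

variable [LinearOrder V] {G : SimpleGraph V} {U : Set V} {t v : V}

/-- The parent of `v` is its least neighbour, provided that this is less than `v`. The edges between
vertices and their parents form a forest, whose roots are the local minima of `G`. -/
def IsParent (G : SimpleGraph V) (s v : V) : Prop := IsLeast (G.neighborSet v) s ∧ s < v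

theorem mem_lowerBounds_neighborSet_iff [Finite V] :
    v ∈ lowerBounds (G.neighborSet v) ↔ ∀ t, ¬ IsParent G t v := by
  refine ⟨fun hv t ht => (hv ht.1.1).not_gt ht.2, fun hv t ht => not_lt.1 fun htv => ?_⟩
  obtain ⟨s, hs, h_least⟩ := Set.exists_min_image _ id (G.neighborSet v).toFinite ⟨t, ht⟩
  exact hv s ⟨⟨hs, h_least⟩, (h_least t ht).trans_lt htv⟩

/-- The subgraph of `G` in which only the vertices in `U` are joined to their children. -/
def linkedGraph (G : SimpleGraph V) (U : Set V) : SimpleGraph V where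
  Adj a b := G.Adj a b ∧ (IsParent G a b → a ∈ U) ∧ (IsParent G b a → b ∈ U)
  symm := ⟨fun _ _ h => ⟨h.1.symm, h.2.2, h.2.1⟩⟩
  loopless := ⟨fun _ h => h.1.ne rfl⟩

theorem linkedGraph_univ : linkedGraph G Set.univ = G := by
  ext; simp [linkedGraph]

theorem linkedGraph_insert_adj_self : (linkedGraph G (insert s U)).Adj s w ↔
    (linkedGraph G U).Adj s w ∨ IsParent G s w := by
  simp only [linkedGraph, Set.mem_insert_iff, true_or, implies_true, true_and]
  constructor
  · rintro ⟨h, hw⟩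
    refine or_iff_not_imp_right.2 fun hs => ⟨h, fun h' => absurd h' hs, fun h' => ?_⟩
    exact (hw h').resolve_left h'.2.ne
  · rintro (⟨h, -, hw⟩ | h)
    · exact ⟨h, fun h' => .inr (hw h')⟩
    · exact ⟨h.1.1.symm, fun h' => absurd h'.2 h.2.not_gt⟩

theorem linkedGraph_insert_adj_of_ne (ha : a ≠ s) (hb : b ≠ s) :
    (linkedGraph G (insert s U)).Adj a b ↔ (linkedGraph G U).Adj a b := by
  simp [linkedGraph, ha, hb]

theorem not_isParent_of_adj (hs : ∀ t ∈ U, s < t) (h : (linkedGraph G U).Adj s w) :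
    ∀ t ∈ insert s U, ¬ IsParent G t w := by
  rintro t (rfl | ht) h_parent
  · exact (hs t (h.2.1 h_parent)).false
  · exact (hs t ht).not_ge (h_parent.1.2 h.1.symm)

variable {ι : Type*} {P : ι → List V} {C : List (Σ (u : V) (v : V), G.Walk u v)}

/-- The paths `P` and the closed walks `C` cover the graph `linkedGraph G U`, and a vertex is an end
of one of the paths unless its parent lies in `U`. -/
structure IsLinkedCover (G : SimpleGraph V) (U : Set V) (P : ι → List V)
    (C : List (Σ (u : V) (v : V), G.Walk u v)) : Prop where
  isPathList (i : ι) : IsPathList (P i)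
  isCycleOrEdge : ∀ p ∈ C, IsCycleOrEdge p
  exists_consecutive_or_iff (a b : V) :
    ((∃ i, Consecutive (P i) a b) ∨ ∃ p ∈ C, s(a, b) ∈ p.2.2.edges) ↔ (linkedGraph G U).Adj a b
  exists_endpoint_iff (v : V) :
    (∃ e : ι × Bool, endpoint (P e.1) e.2 = some v) ↔ ∀ t ∈ U, ¬ IsParent G t v

/-- The ends of the paths `P` at the children of `s`. -/
def childEnds (G : SimpleGraph V) (s : V) (P : ι → List V) : Set (ι × Bool) :=
  {e | ∃ v, IsParent G s v ∧ endpoint (P e.1) e.2 = some v}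

/-- The paths `P`, joined to `s` so as to gain the edges from `s` to its children. -/
noncomputable abbrev linked (G : SimpleGraph V) (s : V) (P : ι → List V) : ι → List V :=
  reroute P s Set.univ (childEnds G s P)

/-- The path `P i` becomes a closed walk when the paths `P` are linked at `s`. -/
abbrev IsClosing (G : SimpleGraph V) (s : V) (P : ι → List V) (i : ι) : Prop :=
  ClosesUp s {e | Rerouted P s Set.univ (childEnds G s P) (i, e)} (P i)

theorem endpoint_ne_of_mem_childEnds : ∀ e ∈ childEnds G s P, endpoint (P e.1) e.2 ≠ some s := by
  rintro e ⟨v, hv, h_end⟩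
  rw [h_end]
  exact fun h => hv.2.ne' (Option.some.inj h)

namespace IsLinkedCover

variable (hC : IsLinkedCover G U P C)
include hC

theorem adj_of_toward {e : ι × Bool} (h : toward s (P e.1) e.2 = some w) :
    (linkedGraph G U).Adj s w :=
  (hC.exists_consecutive_or_iff s w).1
    (.inl ⟨e.1, (consecutive_iff_exists_toward (hC.isPathList _).nodup).2 ⟨_, h⟩⟩)

variable (hs : ∀ t ∈ U, s < t)
include hs

theorem exists_mem_childEnds_iff :
    (∃ e ∈ childEnds G s P, endpoint (P e.1) e.2 = some w) ↔ IsParent G s w := by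
  constructor
  · rintro ⟨e, ⟨v, hv, hev⟩, hew⟩
    rwa [Option.some.inj (hew.symm.trans hev)]
  · intro hw
    obtain ⟨e, he⟩ := (hC.exists_endpoint_iff w).2
      fun t ht h => (hs t ht).ne (hw.1.unique h.1)
    exact ⟨e, ⟨w, hw, he⟩, he⟩

theorem exists_consecutive_linked_or_iff :
    ((∃ i, Consecutive (linked G s P i) a b) ∨ ∃ p ∈ C, s(a, b) ∈ p.2.2.edges) ↔
      (linkedGraph G (insert s U)).Adj a b := by
  have at_s (w : V) : ((∃ i, Consecutive (linked G s P i) s w) ∨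
      ∃ p ∈ C, s(s, w) ∈ p.2.2.edges) ↔ (linkedGraph G (insert s U)).Adj s w := by
    rw [exists_consecutive_reroute hC.isPathList endpoint_ne_of_mem_childEnds,
      hC.exists_mem_childEnds_iff hs, or_right_comm, hC.exists_consecutive_or_iff,
      linkedGraph_insert_adj_self]
    intro i w hw
    obtain ⟨e, he⟩ := (hC.exists_endpoint_iff w).2 fun t ht => not_isParent_of_adj hs
      ((hC.exists_consecutive_or_iff s w).1 (.inl ⟨i, hw⟩)) t (.inr ht)
    exact ⟨e, Set.mem_univ e, he⟩
  by_cases ha : a = s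
  · rw [ha, at_s]
  by_cases hb : b = s
  · rw [hb, SimpleGraph.adj_comm, ← at_s, Sym2.eq_swap,
      exists_congr fun i => ⟨Consecutive.symm, Consecutive.symm⟩]
  · simp only [consecutive_reroute_of_ne hC.isPathList ha hb, linkedGraph_insert_adj_of_ne ha hb,
      hC.exists_consecutive_or_iff]

theorem not_isParent_of_endpoint_linked {e : ι × Bool} (h_open : ¬ IsClosing G s P e.1)
    (hv : endpoint (linked G s P e.1) e.2 = some v) : ∀ t ∈ insert s U, ¬ IsParent G t v := by
  classical
  rw [endpoint_reroute hC.isPathList endpoint_ne_of_mem_childEnds h_open] at hv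
  split_ifs at hv with he
  · cases h_toward : toward s (P e.1) e.2 with
    | some w =>
      obtain rfl : w = v := by simpa [h_toward] using hv
      exact not_isParent_of_adj hs (hC.adj_of_toward h_toward)
    | none =>
      obtain rfl : s = v := by simpa [h_toward] using hv
      rintro t (rfl | ht) h
      exacts [h.2.false, (hs t ht).not_gt h.2]
  · rintro t (rfl | ht) h
    · exact he (.base ⟨v, h, hv⟩)
    · exact (hC.exists_endpoint_iff v).1 ⟨e, hv⟩ t ht h

omit hs in
theorem exists_endpoint_linked_eq (hv : ∀ t ∈ insert s U, ¬ IsParent G t v) :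
    ∃ e : ι × Bool, ¬ IsClosing G s P e.1 ∧ endpoint (linked G s P e.1) e.2 = some v := by
  classical
  obtain ⟨e, he⟩ := (hC.exists_endpoint_iff v).2 fun t ht => hv t (.inr ht)
  by_cases h : Rerouted P s Set.univ (childEnds G s P) e
  · rcases h with ⟨w, hw, h_end⟩ | @⟨e', _, w, he', h_toward, -, h_end⟩
    · exact absurd (Option.some.inj (h_end.symm.trans he) ▸ hw) (hv s (.inl rfl))
    · obtain rfl := Option.some.inj (h_end.symm.trans he)
      have h_open : ¬ IsClosing G s P e'.1 := fun h => by
        simp [toward, arm_of_notMem h.1] at h_toward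
      refine ⟨e', h_open, ?_⟩
      rw [endpoint_reroute hC.isPathList endpoint_ne_of_mem_childEnds h_open, if_pos he',
        h_toward, Option.getD_some]
  · have h_open : ¬ IsClosing G s P e.1 := fun h' => h (h'.2 e.2)
    refine ⟨e, h_open, ?_⟩
    rw [endpoint_reroute hC.isPathList endpoint_ne_of_mem_childEnds h_open, if_neg h, he]

theorem exists_isCycleOrEdge_of_isClosing {i : ι} (hi : IsClosing G s P i) :
    ∃ p : Σ (u : V) (v : V), G.Walk u v, IsCycleOrEdge p ∧
      ∀ a b, s(a, b) ∈ p.2.2.edges ↔ Consecutive (linked G s P i) a b := by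
  have hP := hC.isPathList i
  have adj (a b : V) (h : Consecutive (linked G s P i) a b) : G.Adj a b :=
    ((hC.exists_consecutive_linked_or_iff hs).1 (.inl ⟨i, h⟩)).1
  rw [linked, reroute, hi.splice_eq] at adj ⊢
  exact exists_isCycleOrEdge hP.ne_nil (hP.nodup.cons hi.1) adj

theorem insert [Finite ι] :
    ∃ C', IsLinkedCover G (insert s U) (fun i : {i // ¬ IsClosing G s P i} => linked G s P i) C' ∧
      Nat.card {i // ¬ IsClosing G s P i} + C'.length = Nat.card ι + C.length := by
  classical
  have := Fintype.ofFinite ι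
  choose p hp hp' using fun i : {i // IsClosing G s P i} =>
    hC.exists_isCycleOrEdge_of_isClosing hs i.2
  refine ⟨C ++ Finset.univ.toList.map p, ⟨fun i => isPathList_splice (hC.isPathList i) i.2,
    ?_, fun a b => ?_, fun v => ?_⟩, ?_⟩
  · simp only [List.mem_append, List.mem_map, Finset.mem_toList, Finset.mem_univ, true_and]
    rintro _ (h | ⟨i, rfl⟩)
    exacts [hC.isCycleOrEdge _ h, hp i]
  · rw [← hC.exists_consecutive_linked_or_iff hs]
    simp only [Subtype.exists, exists_prop, List.mem_append, List.mem_map, Finset.mem_toList,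
      Finset.mem_univ, true_and, or_and_right, exists_or, Sigma.exists, ↓existsAndEq, hp']
    grind
  · constructor
    · rintro ⟨⟨i, e⟩, he⟩
      exact hC.not_isParent_of_endpoint_linked hs (e := (i, e)) i.2 he
    · intro hv
      obtain ⟨⟨i, e⟩, hi, he⟩ := hC.exists_endpoint_linked_eq hv
      exact ⟨(⟨i, hi⟩, e), he⟩
  · rw [← Nat.card_congr (Equiv.sumCompl (IsClosing G s P)), Nat.card_sum]
    simp only [Nat.card_eq_fintype_card, List.length_append, List.length_map,
      Finset.length_toList, Finset.card_univ]
    lia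

end IsLinkedCover

theorem exists_isLinkedCover_empty [Finite V] (G : SimpleGraph V) :
    ∃ P : V → List V, IsLinkedCover G ∅ P [] := by
  obtain ⟨P, hP, hends⟩ := exists_isPathDecomposition (linkedGraph G ∅)
  refine ⟨P, hP.isPathList, by simp, fun a b => ?_, by simpa using hends⟩
  simpa using hP.exists_consecutive_iff a b

universe u in
theorem exists_isLinkedCover_univ {V : Type u} [Finite V] [LinearOrder V] (G : SimpleGraph V) :
    ∃ (ι : Type u) (_ : Finite ι) (P : ι → List V) (C : List (Σ (u : V) (v : V), G.Walk u v)),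
      IsLinkedCover G Set.univ P C ∧ Nat.card ι + C.length = Nat.card V := by
  have := Fintype.ofFinite V
  rw [← Finset.coe_univ]
  induction (Finset.univ : Finset V) using Finset.induction_on_min with
  | empty =>
    obtain ⟨P, hP⟩ := exists_isLinkedCover_empty G
    exact ⟨V, inferInstance, P, [], by rwa [Finset.coe_empty], by simp⟩
  | insert s U hs ih =>
    obtain ⟨ι, _, P, C, hC, h_card⟩ := ih
    obtain ⟨C', hC', h_card'⟩ := hC.insert hs
    exact ⟨_, inferInstance, _, C', by rwa [Finset.coe_insert], h_card'.trans h_card⟩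

namespace IsLinkedCover

variable (hC : IsLinkedCover G Set.univ P C)
include hC

theorem adj_of_consecutive {i : ι} (h : Consecutive (P i) a b) : G.Adj a b :=
  linkedGraph_univ (G := G) ▸ (hC.exists_consecutive_or_iff a b).1 (.inl ⟨i, h⟩)

theorem eq_singleton [Finite V]
    (h_root : ∀ v w, v ∈ lowerBounds (G.neighborSet v) → w ∈ lowerBounds (G.neighborSet w) →
      G.Reachable v w → v = w) (i : ι) : ∃ v, P i = [v] := by
  have root {e : Bool} {v : V} (hv : endpoint (P i) e = some v) :
      v ∈ lowerBounds (G.neighborSet v) := by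
    simpa [mem_lowerBounds_neighborSet_iff] using (hC.exists_endpoint_iff v).1 ⟨(i, e), hv⟩
  obtain ⟨v, hv⟩ := (hC.isPathList i).exists_endpoint false
  obtain ⟨w, hw⟩ := (hC.isPathList i).exists_endpoint true
  obtain ⟨p, hp⟩ := exists_walk_support_eq (fun _ _ => hC.adj_of_consecutive) hv hw
  obtain rfl := h_root v w (root hv) (root hw) p.reachable
  have p_nil : p.Nil := by
    rw [← SimpleGraph.Walk.isPath_iff_nil, SimpleGraph.Walk.isPath_def, hp]
    exact (hC.isPathList i).nodup
  exact ⟨v, hp.symm.trans (SimpleGraph.Walk.nil_iff_support_eq.1 p_nil)⟩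

theorem card_connectedComponent_le [Finite V] [Finite ι] (hP : ∀ i, ∃ v, P i = [v]) :
    Nat.card G.ConnectedComponent ≤ Nat.card ι := by
  choose v hv using hP
  refine Nat.card_le_card_of_surjective (fun i => G.connectedComponentMk (v i)) fun c => ?_
  obtain ⟨r, hr, h_least⟩ := Set.exists_min_image c.supp id c.supp.toFinite c.nonempty_supp
  have r_root : r ∈ lowerBounds (G.neighborSet r) := fun t ht =>
    h_least t (c.mem_supp_of_adj_mem_supp hr ht)
  obtain ⟨⟨i, e⟩, he⟩ := (hC.exists_endpoint_iff r).2
    fun t _ => mem_lowerBounds_neighborSet_iff.1 r_root t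
  obtain rfl : r = v i := by simpa [hv] using mem_of_endpoint he
  exact ⟨i, hr⟩

theorem mem_edgeSet_iff (hP : ∀ i, ∃ v, P i = [v]) (e : Sym2 V) :
    e ∈ G.edgeSet ↔ ∃ p ∈ C, e ∈ p.2.2.edges := by
  induction e with | _ a b
  have not_consecutive (i : ι) : ¬ Consecutive (P i) a b := by
    obtain ⟨v, hv⟩ := hP i
    exact hv ▸ not_consecutive_singleton
  simpa [not_consecutive, linkedGraph_univ] using (hC.exists_consecutive_or_iff a b).symm

end IsLinkedCover

end Linked

theorem exists_linearOrder_eq_of_mem_lowerBounds [Finite V] (G : SimpleGraph V) :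
    ∃ _ : LinearOrder V, ∀ v w, v ∈ lowerBounds (G.neighborSet v) →
      w ∈ lowerBounds (G.neighborSet w) → G.Reachable v w → v = w := by
  let rep (v : V) : V := (G.connectedComponentMk v).out
  have rep_eq {v w : V} (h : G.Reachable v w) : rep v = rep w :=
    congrArg Quot.out (SimpleGraph.ConnectedComponent.sound h)
  let key (v : V) : ℕ ×ₗ Fin (Nat.card V) := toLex (G.dist v (rep v), Finite.equivFin V v)
  have key_injective : key.Injective := fun v w h =>
    (Finite.equivFin V).injective (congrArg Prod.snd (toLex.injective h))
  let order : LinearOrder V := LinearOrder.lift' key key_injective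
  have eq_rep {v : V} (hv : v ∈ lowerBounds (G.neighborSet v)) : v = rep v := by
    obtain ⟨p, hp⟩ := (SimpleGraph.ConnectedComponent.exact
      (G.connectedComponentMk v).out_eq.symm).exists_walk_length_eq_dist
    by_contra hne
    obtain ⟨t, h, q, rfl⟩ := SimpleGraph.Walk.exists_eq_cons_of_ne hne p
    refine (hv h : key v ≤ key t).not_gt (Prod.Lex.toLex_lt_toLex.2 (.inl ?_))
    rw [← rep_eq h.reachable]
    exact (SimpleGraph.dist_le q).trans_lt (hp ▸ Nat.lt_succ_self _)
  exact ⟨order, fun v w hv hw h => by rw [eq_rep hv, eq_rep hw, rep_eq h]⟩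

end Pyber

open Pyber in
theorem stmt_12_general {V : Type*} [Finite V] (G : SimpleGraph V) :
    ∃ L : List (Σ (u : V) (v : V), G.Walk u v),
      L.length + Nat.card G.ConnectedComponent ≤ Nat.card V ∧
      (∀ p ∈ L, (∃ h : p.2.1 = p.1, (p.2.2.copy rfl h).IsCycle) ∨ p.2.2.length = 1) ∧
      (∀ e : Sym2 V, e ∈ G.edgeSet ↔ ∃ p ∈ L, e ∈ p.2.2.edges) := by
  obtain ⟨_, h_root⟩ := exists_linearOrder_eq_of_mem_lowerBounds G
  obtain ⟨ι, _, P, C, hC, h_card⟩ := exists_isLinkedCover_univ G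
  have hP := hC.eq_singleton h_root
  have := hC.card_connectedComponent_le hP
  exact ⟨C, by lia, hC.isCycleOrEdge, hC.mem_edgeSet_iff hP⟩

/-- Pyber: the edge set of every simple graph on n vertices can
be covered by at most n − 1 subgraphs, each of which is a cycle or a single
edge (a walk of length 1). -/
theorem stmt_12 (n : ℕ) (G : SimpleGraph (Fin n)) :
    ∃ L : List (Σ (u : Fin n) (v : Fin n), G.Walk u v),
      L.length ≤ n - 1 ∧
      (∀ p ∈ L, (∃ h : p.2.1 = p.1, (p.2.2.copy rfl h).IsCycle) ∨
        p.2.2.length = 1) ∧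
      (∀ e : Sym2 (Fin n), e ∈ G.edgeSet ↔ ∃ p ∈ L, e ∈ p.2.2.edges) := by
  obtain ⟨L, h_length, hL⟩ := stmt_12_general G
  refine ⟨L, ?_, hL⟩
  rcases n with _ | n
  · simpa using h_length
  · have : 0 < Nat.card G.ConnectedComponent := Nat.card_pos
    rw [Nat.card_fin] at h_length
    lia
end

section
/- Every simple graph on n vertices which contains no cycle of length 4 can be covered by at most ⌊(n−1)/2⌋ cycles together with at most n − 1 single edges. -/
/-!
Choose a rooted spanning forest of `G` in which the parent of `v` is its first neighbour in a
suitable ordering of the vertices, and let `H` be the graph of the other edges. Part of a spanning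
forest of `H` can be turned into single edges so that, among the remaining edges, all vertices have
odd degree, except at most one per component of `H`. Then Lovász's argument decomposes these edges
into paths and cycles, with exactly one path ending at each vertex of odd degree and none elsewhere.
The roots of the first forest are isolated in `H`, so there are at most `(n - 1) / 2` of them.

Now go through the vertices `p` in descending order and extend every path that ends at a child of
`p` by the edge to `p`. If the path already passes through `p`, delete its edge `w p` that would
close a cycle, so that the path now ends at `w` instead. If another path ends at `w`, extend that
one to `p` as well, which restores the edge, and so on. The deleted edges that are not restored and
the tree edges of children at which no path ends become single edges. Each of them is charged to a
vertex at which no path ended before, so the number of single edges plus the number of such vertices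
whose parent is yet to come never exceeds `n - 1`.

At the end all path ends lie at roots, and since distinct roots lie in different components, only
cycles are left.
-/

open Finset

namespace CycleEdgeCover

universe u

variable {V : Type u}

/-! ### Paths and cycles as lists of vertices -/

section Lists

/-- The edges joining `p` to the members of `m`, with multiplicity. -/
abbrev spokes (p : V) (m : Multiset V) : Multiset (Sym2 V) := m.map (s(·, p))

/-- The edges of the path that runs through the vertices of `l` in order. -/
def pathEdges (l : List V) : Multiset (Sym2 V) := (List.zipWith (s(·, ·)) l l.tail : List (Sym2 V))

lemma pathEdges_nil : pathEdges ([] : List V) = 0 := rfl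

lemma pathEdges_cons (p : V) (l : List V) :
    pathEdges (p :: l) = spokes p l.head?.toList + pathEdges l := by
  cases l with
  | nil => rfl
  | cons a t => simp [pathEdges, Sym2.eq_swap]

lemma pathEdges_reverse_append_cons (p : V) (l₁ l₂ : List V) :
    pathEdges (l₁.reverse ++ p :: l₂) = pathEdges (p :: l₁) + pathEdges (p :: l₂) := by
  induction l₁ generalizing p l₂ with
  | nil => simp [pathEdges_cons, pathEdges_nil]
  | cons a t ih =>
    simp [ih a (p :: l₂), pathEdges_cons p (a :: t), pathEdges_cons a (p :: l₂),
      Sym2.eq_swap]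

lemma pathEdges_reverse (l : List V) : pathEdges l.reverse = pathEdges l := by
  cases l with
  | nil => rfl
  | cons a t => simp [pathEdges_reverse_append_cons, pathEdges_cons a [], pathEdges_nil]

lemma pathEdges_append_singleton (l : List V) (p : V) :
    pathEdges (l ++ [p]) = spokes p l.getLast?.toList + pathEdges l := by
  simpa [pathEdges_cons p, pathEdges_reverse, pathEdges_nil]
    using pathEdges_reverse_append_cons p l.reverse []

lemma isChain_adj_of_pathEdges_subset {G : SimpleGraph V} {l : List V}
    (h : ∀ e ∈ pathEdges l, e ∈ G.edgeSet) : l.IsChain G.Adj := by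
  induction l with
  | nil => exact .nil
  | cons a t ih =>
    simp only [pathEdges_cons, Multiset.mem_add] at h
    cases t with
    | nil => exact .singleton a
    | cons b t =>
      have hba : G.Adj b a := h s(b, a) (.inl (by simp))
      exact .cons_cons hba.symm (ih fun e he ↦ h e (.inr he))

end Lists

section Values

variable {S : Type*}

/-- The multiset of the values that the partial function `f` takes on `B`. -/
def valuesOn (B : Finset S) (f : S → Option V) : Multiset V :=
  ∑ s ∈ B, ((f s).toList : Multiset V)

lemma mem_valuesOn {B : Finset S} {f : S → Option V} {v : V} :
    v ∈ valuesOn B f ↔ ∃ s ∈ B, f s = some v := by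
  simp [valuesOn, Multiset.mem_sum, Option.mem_toList]

lemma count_valuesOn [DecidableEq V] (B : Finset S) (f : S → Option V) (v : V) :
    (valuesOn B f).count v = #{s ∈ B | f s = some v} := by
  rw [valuesOn, Multiset.count_sum', card_filter]
  refine sum_congr rfl fun s _ ↦ ?_
  cases f s <;> simp [Multiset.count_singleton, eq_comm]

lemma valuesOn_prod {ι : Type*} [Fintype ι] [DecidableEq ι] [Fintype S] [DecidableEq S]
    (B : Finset (ι × S)) (f : ι × S → Option V) :
    valuesOn B f = ∑ i, valuesOn {σ | (i, σ) ∈ B} fun σ ↦ f (i, σ) :=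
  sum_finset_product _ _ _ (by simp)

lemma valuesOn_sdiff_add [DecidableEq S] {A B : Finset S} (h : A ⊆ B) (f : S → Option V) :
    valuesOn (B \ A) f + valuesOn A f = valuesOn B f :=
  sum_sdiff h

lemma exists_closed_superset [Finite S] (E W : S → Option V) {A : Finset S}
    (hA : ∀ s ∈ A, ∀ t w, E s = some w → W t ≠ some w) :
    ∃ B, A ⊆ B ∧ (∀ s ∈ B, s ∉ A → ∃ t ∈ B, ∃ w, W t = some w ∧ E s = some w) ∧
      (∀ s ∈ B, s ∉ A → ∀ t ∈ B, t ∉ A → E s = E t → s = t) ∧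
      ∀ t ∈ B, ∀ w, W t = some w → (∃ s, E s = some w) → ∃ s ∈ B, s ∉ A ∧ E s = some w := by
  classical
  cases nonempty_fintype S
  obtain rfl | ⟨s₀, -⟩ := A.eq_empty_or_nonempty
  · exact ⟨∅, by simp⟩
  have : Nonempty S := ⟨s₀⟩
  choose! pick E_pick using fun w (h : ∃ s, E s = some w) ↦ h
  let next (s t : S) : Prop := ∃ w, W s = some w ∧ E t = some w ∧ pick w = t
  let B : Finset S := {t | ∃ s ∈ A, Relation.ReflTransGen next s t}
  have exists_next : ∀ t ∈ B, t ∉ A → ∃ s ∈ B, next s t := by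
    intro t ht htA
    obtain ⟨s₀, hs₀, hst⟩ := (mem_filter_univ t).1 ht
    rcases hst.cases_tail with rfl | ⟨s, hs, hst⟩
    · exact absurd hs₀ htA
    · exact ⟨s, (mem_filter_univ s).2 ⟨s₀, hs₀, hs⟩, hst⟩
  refine ⟨B, fun s hs ↦ (mem_filter_univ s).2 ⟨s, hs, .refl⟩, fun s hs hsA ↦ ?_,
    fun s hs hsA t ht htA hst ↦ ?_, fun t ht w hw hs ↦ ⟨pick w, ?_, fun hA' ↦ ?_, E_pick w hs⟩⟩
  · obtain ⟨t, ht, w, hw, hs, -⟩ := exists_next s hs hsA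
    exact ⟨t, ht, w, hw, hs⟩
  · obtain ⟨-, -, w, -, hs, rfl⟩ := exists_next s hs hsA
    obtain ⟨-, -, w', -, ht, rfl⟩ := exists_next t ht htA
    rw [Option.some_injective _ (hs.symm.trans (hst.trans ht))]
  · obtain ⟨s₀, hs₀, hst⟩ := (mem_filter_univ t).1 ht
    exact (mem_filter_univ _).2 ⟨s₀, hs₀, hst.tail ⟨w, hw, E_pick w hs, rfl⟩⟩
  · exact hA _ hA' t w (E_pick w hs) hw

lemma exists_superset_count_valuesOn [Fintype S] [DecidableEq V] (E W : S → Option V)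
    {A : Finset S} (hA : ∀ s ∈ A, ∀ t w, E s = some w → W t ≠ some w)
    (count_W_le : ∀ w, (valuesOn univ W).count w ≤ 1) :
    ∃ B, (∀ s ∈ B, s ∉ A → ∃ t w, W t = some w ∧ E s = some w) ∧
      (∀ s ∈ B, s ∉ A → ∀ t ∈ B, E s = E t → s = t) ∧
      ∀ w, (∃ s, E s = some w) →
        (valuesOn B E).count w = (valuesOn B W).count w + (valuesOn A E).count w := by
  classical
  obtain ⟨B, hAB, B_new, B_inj, B_closed⟩ := exists_closed_superset E W hA
  refine ⟨B, fun s hs hsA ↦ ?_, fun s hs hsA t ht hst ↦ ?_, fun w hw ↦ ?_⟩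
  · obtain ⟨t, -, w, hw⟩ := B_new s hs hsA
    exact ⟨t, w, hw⟩
  · refine B_inj s hs hsA t ht (fun htA ↦ ?_) hst
    obtain ⟨t', -, w, hw, hs⟩ := B_new s hs hsA
    exact hA t htA t' w (hst.symm.trans hs) hw
  · have new_le : (valuesOn (B \ A) E).count w ≤ 1 := by
      rw [count_valuesOn, card_le_one]
      grind
    have W_le : (valuesOn B W).count w ≤ 1 := by
      refine le_trans ?_ (count_W_le w)
      simp only [count_valuesOn]
      exact card_le_card (filter_subset_filter _ (subset_univ B))
    have pos_iff : 0 < (valuesOn (B \ A) E).count w ↔ 0 < (valuesOn B W).count w := by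
      simp only [Multiset.count_pos, mem_valuesOn, mem_sdiff, and_assoc]
      constructor
      · rintro ⟨s, hs, hsA, hsw⟩
        obtain ⟨t, ht, v, hv, hs⟩ := B_new s hs hsA
        exact ⟨t, ht, by rw [hv, ← hs, hsw]⟩
      · exact fun ⟨t, ht, htw⟩ ↦ B_closed t ht w htw hw
    rw [← valuesOn_sdiff_add hAB, Multiset.count_add]
    omega

end Values

/-- A path, possibly with a single vertex, or a cycle, given by its vertices in order; a cycle is
closed by the edge from the last vertex to the first. -/
structure PathOrCycle (V : Type u) where
  verts : List V
  isCycle : Bool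
  nodup : verts.Nodup
  ne_nil : verts ≠ []
  three_le_length : isCycle → 3 ≤ verts.length

namespace PathOrCycle

/-- The edges of a path or cycle, as a multiset for the sake of counting. -/
def edges (x : PathOrCycle V) : Multiset (Sym2 V) :=
  pathEdges x.verts + if x.isCycle then {s(x.verts.getLast x.ne_nil, x.verts.head x.ne_nil)} else 0

/-- The first (`false`) or last (`true`) vertex of a path; a cycle has no ends. Both ends of a
single-vertex path are its vertex. -/
def endAt (x : PathOrCycle V) (σ : Bool) : Option V :=
  bif x.isCycle then none else bif σ then x.verts.getLast? else x.verts.head?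

/-- The two ends of a path, with multiplicity. -/
abbrev ends (x : PathOrCycle V) : Multiset V := valuesOn univ x.endAt

/-- The path formed by two arms that start at the common neighbour `p` of their first vertices. -/
def ofArms (p : V) (arm : Bool → List V) (h : ((arm false).reverse ++ p :: arm true).Nodup) :
    PathOrCycle V :=
  ⟨_, false, h, by simp, by simp⟩

lemma edges_ofArms {p : V} {arm : Bool → List V} (h) :
    (ofArms p arm h).edges = ∑ σ, pathEdges (p :: arm σ) := by
  simp [edges, ofArms, pathEdges_reverse_append_cons, add_comm]

lemma endAt_ofArms {p : V} {arm : Bool → List V} (h) (σ : Bool) :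
    (ofArms p arm h).endAt σ = (p :: arm σ).getLast? := by
  cases σ <;> simp [endAt, ofArms, List.head?_append, List.getLast?_cons]

lemma length_verts_ofArms {p : V} {arm : Bool → List V} (h) :
    (ofArms p arm h).verts.length = ∑ σ, (arm σ).length + 1 := by
  simp only [ofArms, List.length_append, List.length_reverse, List.length_cons, Fintype.sum_bool]
  omega

lemma exists_eq_ofArms {x : PathOrCycle V} (hx : x.isCycle = false) {p : V} (hp : p ∈ x.verts) :
    ∃ arm h, x = ofArms p arm h := by
  obtain ⟨verts, _, nodup, _, _⟩ := x
  subst hx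
  obtain ⟨l₁, l₂, rfl⟩ := List.append_of_mem hp
  exact ⟨fun σ ↦ bif σ then l₂ else l₁.reverse, by simpa using nodup, by simp [ofArms]⟩

/-- `x'` arises from `x` by joining the ends `A` of `x` to `p` and deleting the edges between `p`
and `B`, which turns the members of `B` into ends. -/
structure IsReroute (p : V) (A B : Multiset V) (x x' : PathOrCycle V) : Prop where
  length_le : x.verts.length ≤ x'.verts.length
  edges_add : x'.edges + spokes p B = x.edges + spokes p A
  ends_add : ∃ k, x'.ends + A = x.ends + B + Multiset.replicate k p

lemma valuesOn_eq_sum_ite {S : Type*} [Fintype S] [DecidableEq S] (B : Finset S)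
    (f : S → Option V) :
    valuesOn B f = ∑ s, if s ∈ B then ((f s).toList : Multiset V) else 0 := by
  simp [valuesOn]

lemma exists_isReroute_ofArms {p : V} {arm : Bool → List V} (h) {b : Finset Bool}
    (hb : ∀ σ ∈ b, (ofArms p arm h).endAt σ ≠ some p) :
    ∃ x', IsReroute p (valuesOn b (ofArms p arm h).endAt) (valuesOn b fun σ ↦ (arm σ).head?)
      (ofArms p arm h) x' := by
  have arm_ne_nil : ∀ σ ∈ b, arm σ ≠ [] := by
    intro σ hσ harm
    simpa [endAt_ofArms, harm] using hb σ hσ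
  have getLast?_cons : ∀ σ ∈ b, (p :: arm σ).getLast? = (arm σ).getLast? := by
    intro σ hσ
    obtain ⟨a, t, hat⟩ := List.exists_cons_of_ne_nil (arm_ne_nil σ hσ)
    rw [hat, List.getLast?_cons_cons]
  set arm' : Bool → List V := fun σ ↦ if σ ∈ b then (arm σ).reverse else arm σ with harm'
  have perm σ : (arm' σ).Perm (arm σ) := by
    simp only [harm']
    split_ifs
    exacts [List.reverse_perm _, .refl _]
  have h' : ((arm' false).reverse ++ p :: arm' true).Nodup := by
    refine (List.Perm.nodup_iff (.append ?_ ((perm true).cons p))).2 h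
    exact ((List.reverse_perm _).trans (perm false)).trans (List.reverse_perm _).symm
  refine ⟨ofArms p arm' h', ?_, ?_, 0, ?_⟩
  · simp only [length_verts_ofArms, (perm _).length_eq, le_refl]
  · simp only [edges_ofArms, valuesOn_eq_sum_ite, endAt_ofArms, spokes,
      ← Multiset.coe_mapAddMonoidHom, map_sum, ← sum_add_distrib]
    refine sum_congr rfl fun σ _ ↦ ?_
    by_cases hσ : σ ∈ b
    · simp only [harm', hσ, if_true, pathEdges_cons, List.head?_reverse, pathEdges_reverse,
        getLast?_cons, Multiset.coe_mapAddMonoidHom]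
      abel
    · simp [harm', hσ]
  · simp only [ends, valuesOn_eq_sum_ite, endAt_ofArms, ← sum_add_distrib, Multiset.replicate_zero,
      add_zero, mem_univ, if_true]
    refine sum_congr rfl fun σ _ ↦ ?_
    by_cases hσ : σ ∈ b
    · have hne : (arm σ).reverse ≠ [] := by simpa using arm_ne_nil σ hσ
      obtain ⟨a, t, hat⟩ := List.exists_cons_of_ne_nil hne
      have : (p :: (arm σ).reverse).getLast? = (arm σ).head? := by
        rw [hat, List.getLast?_cons_cons, ← hat, List.getLast?_reverse]
      simp [harm', hσ, getLast?_cons, this, add_comm]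
    · simp [harm', hσ]

lemma exists_isReroute_of_notMem {x : PathOrCycle V} {p : V} (hp : p ∉ x.verts) {b : Finset Bool}
    (hb : ∀ σ ∈ b, x.endAt σ ≠ none) (hlen : b = univ → 2 ≤ x.verts.length) :
    ∃ x', IsReroute p (valuesOn b x.endAt) 0 x x' := by
  obtain rfl | ⟨σ, hσ⟩ := b.eq_empty_or_nonempty
  · exact ⟨x, le_rfl, by simp [valuesOn], 0, by simp [valuesOn]⟩
  obtain ⟨l, c, nodup, ne_nil, three_le⟩ := x
  obtain rfl : c = false := by
    have := hb σ hσ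
    cases c
    · rfl
    · simp [endAt] at this
  have head?_eq := List.head?_eq_some_head ne_nil
  have getLast?_eq := List.getLast?_eq_some_getLast ne_nil
  have nodup' : (p :: l).Nodup := List.nodup_cons.2 ⟨hp, nodup⟩
  have cases_b : ∀ b : Finset Bool, b = ∅ ∨ b = {false} ∨ b = {true} ∨ b = univ := by decide
  rcases cases_b b with rfl | rfl | rfl | rfl
  · simp at hσ
  · refine ⟨⟨p :: l, false, nodup', by simp, by simp⟩, ?_, ?_, 1, ?_⟩
    · simp
    · simp [edges, pathEdges_cons p, valuesOn, endAt, add_comm]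
    · simp [valuesOn, endAt, head?_eq, getLast?_eq, List.getLast?_cons,
        -Multiset.singleton_add, add_comm, add_assoc]
  · refine ⟨⟨l ++ [p], false, ?_, by simp, by simp⟩, ?_, ?_, 1, ?_⟩
    · exact (List.perm_append_singleton p _).nodup_iff.2 nodup'
    · simp
    · simp [edges, valuesOn, endAt, pathEdges_append_singleton, add_comm]
    · simp [valuesOn, endAt, head?_eq, getLast?_eq, -Multiset.singleton_add, add_comm,
        add_left_comm]
  · refine ⟨⟨p :: l, true, nodup', by simp, by simpa using hlen⟩, ?_, ?_, 0, ?_⟩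
    · simp
    · simp [edges, pathEdges_cons p, valuesOn, endAt, head?_eq, getLast?_eq,
        List.getLast_cons ne_nil, -Multiset.singleton_add, add_comm, add_left_comm]
    · simp [valuesOn, endAt]

lemma exists_isReroute (x : PathOrCycle V) (p : V) :
    ∃ W : Bool → Option V, (∀ σ, W σ ≠ some p) ∧ spokes p (valuesOn univ W) ≤ x.edges ∧
      ∀ b : Finset Bool, (∀ σ ∈ b, x.endAt σ ≠ none ∧ x.endAt σ ≠ some p) →
        (b = univ → 2 ≤ x.verts.length) →
        ∃ x', IsReroute p (valuesOn b x.endAt) (valuesOn b W) x x' := by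
  by_cases h : x.isCycle = false ∧ p ∈ x.verts
  · obtain ⟨arm, nodup, rfl⟩ := exists_eq_ofArms h.1 h.2
    refine ⟨fun σ ↦ (arm σ).head?, fun σ hσ ↦ ?_, ?_, fun b hb _ ↦ ?_⟩
    · have : p ∈ arm σ := List.mem_of_mem_head? hσ
      cases σ <;> grind
    · rw [edges_ofArms, valuesOn, spokes, ← Multiset.coe_mapAddMonoidHom, map_sum]
      exact sum_le_sum fun σ _ ↦ by simp [pathEdges_cons]
    · exact exists_isReroute_ofArms nodup fun σ hσ ↦ (hb σ hσ).2
  · refine ⟨fun _ ↦ none, by simp, by simp [valuesOn], fun b hb hlen ↦ ?_⟩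
    rw [show valuesOn b (fun _ ↦ (none : Option V)) = 0 by simp [valuesOn]]
    by_cases hp : p ∈ x.verts
    · have hx : x.isCycle = true := by simpa [hp] using h
      obtain rfl : b = ∅ := eq_empty_of_forall_notMem fun σ hσ ↦ (hb σ hσ).1 (by simp [endAt, hx])
      exact ⟨x, le_rfl, by simp [valuesOn], 0, by simp [valuesOn]⟩
    · exact exists_isReroute_of_notMem hp (fun σ hσ ↦ (hb σ hσ).1) hlen

lemma two_le_length_of_endAt_ne {x : PathOrCycle V} (h : x.endAt false ≠ x.endAt true) :
    2 ≤ x.verts.length := by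
  contrapose! h
  obtain ⟨a, ha⟩ := List.length_eq_one_iff.1
    (le_antisymm (Nat.le_of_lt_succ h) (List.length_pos_iff.2 x.ne_nil))
  simp [endAt, ha]

lemma two_le_length_of_nodup_ends {x : PathOrCycle V} (h : x.ends.Nodup) : 2 ≤ x.verts.length := by
  cases hx : x.isCycle with
  | true => exact (Nat.le_succ 2).trans (x.three_le_length hx)
  | false =>
    refine two_le_length_of_endAt_ne fun heq ↦ ?_
    obtain ⟨a, ha⟩ : ∃ a, x.endAt true = some a :=
      ⟨_, by simpa [endAt, hx] using List.getLast?_eq_some_getLast x.ne_nil⟩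
    simp [ends, valuesOn, heq, ha] at h

variable {G : SimpleGraph V} {x : PathOrCycle V}

lemma isChain_adj (hx : ∀ e ∈ x.edges, e ∈ G.edgeSet) : x.verts.IsChain G.Adj :=
  isChain_adj_of_pathEdges_subset fun e he ↦ hx e (Multiset.mem_add.2 (.inl he))

lemma head_ne_getLast (h : 2 ≤ x.verts.length) :
    x.verts.head x.ne_nil ≠ x.verts.getLast x.ne_nil := by
  rw [List.head_eq_getElem, List.getLast_eq_getElem, ne_eq, x.nodup.getElem_inj_iff]
  omega

lemma head_mem_ends (hx : x.isCycle = false) : x.verts.head x.ne_nil ∈ x.ends :=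
  mem_valuesOn.2 ⟨false, mem_univ _, by simpa [endAt, hx] using List.head?_eq_some_head x.ne_nil⟩

lemma getLast_mem_ends (hx : x.isCycle = false) : x.verts.getLast x.ne_nil ∈ x.ends :=
  mem_valuesOn.2
    ⟨true, mem_univ _, by simpa [endAt, hx] using List.getLast?_eq_some_getLast x.ne_nil⟩

lemma exists_isCycle_edges_eq (hx : ∀ e ∈ x.edges, e ∈ G.edgeSet) (hcycle : x.isCycle) :
    ∃ c : Σ v : V, G.Walk v v, c.2.IsCycle ∧ ∀ e, e ∈ c.2.edges ↔ e ∈ x.edges := by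
  have adj : G.Adj (x.verts.getLast x.ne_nil) (x.verts.head x.ne_nil) :=
    hx s(x.verts.getLast x.ne_nil, x.verts.head x.ne_nil) (by simp [edges, hcycle])
  let path := SimpleGraph.Walk.ofSupport x.verts x.ne_nil (isChain_adj hx)
  have support_path : path.support = x.verts := SimpleGraph.Walk.support_ofSupport _ _
  refine ⟨⟨_, .cons adj path⟩, ?_, fun e ↦ ?_⟩
  · have := x.three_le_length hcycle
    refine SimpleGraph.Walk.isCycle_iff_isPath_tail_and_le_length.2 ⟨?_, ?_⟩
    · simpa [SimpleGraph.Walk.isPath_def, support_path] using x.nodup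
    · simp only [SimpleGraph.Walk.length_cons, path, SimpleGraph.Walk.length_ofSupport]
      omega
  · rw [SimpleGraph.Walk.edges_cons, SimpleGraph.Walk.edges_eq_zipWith_support, support_path]
    simp [edges, hcycle, pathEdges, or_comm]

end PathOrCycle

/-! ### Lovász's rerouting of path ends -/

section Families

open PathOrCycle

variable {ι : Type u} [Fintype ι]

/-- The edges of a family of paths and cycles, with multiplicity. -/
def totalEdges (X : ι → PathOrCycle V) : Multiset (Sym2 V) := ∑ i, (X i).edges

/-- The end of a family of paths and cycles in a given slot. -/
abbrev slotEnd (X : ι → PathOrCycle V) (s : ι × Bool) : Option V := (X s.1).endAt s.2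

/-- The ends of a family of paths and cycles, with multiplicity. -/
abbrev totalEnds (X : ι → PathOrCycle V) : Multiset V := valuesOn univ (slotEnd X)

lemma mem_totalEdges {X : ι → PathOrCycle V} {e : Sym2 V} :
    e ∈ totalEdges X ↔ ∃ i, e ∈ (X i).edges := by
  simp [totalEdges, Multiset.mem_sum]

lemma totalEnds_eq_sum (X : ι → PathOrCycle V) : totalEnds X = ∑ i, (X i).ends := by
  classical
  simp [totalEnds, valuesOn_prod, slotEnd, ends, -Fintype.univ_bool]

lemma ends_le_totalEnds (X : ι → PathOrCycle V) (i : ι) :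
    (X i).ends ≤ totalEnds X := by
  rw [totalEnds_eq_sum]
  exact single_le_sum (f := fun i ↦ (X i).ends) (fun _ _ ↦ Multiset.zero_le _) (mem_univ i)

lemma exists_reroute_family (X : ι → PathOrCycle V) (p : V) :
    ∃ W : ι × Bool → Option V, (∀ s, W s ≠ some p) ∧ spokes p (valuesOn univ W) ≤ totalEdges X ∧
      ∀ B : Finset (ι × Bool), (∀ s ∈ B, slotEnd X s ≠ none ∧ slotEnd X s ≠ some p) →
        (∀ i, (i, false) ∈ B → (i, true) ∈ B → 2 ≤ (X i).verts.length) →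
        ∃ X' : ι → PathOrCycle V, (∀ i, (X i).verts.length ≤ (X' i).verts.length) ∧
          totalEdges X' + spokes p (valuesOn B W) =
            totalEdges X + spokes p (valuesOn B (slotEnd X)) ∧
          ∃ k, totalEnds X' + valuesOn B (slotEnd X) =
            totalEnds X + valuesOn B W + Multiset.replicate k p := by
  classical
  choose W W_ne W_le hW using fun i ↦ exists_isReroute (X i) p
  refine ⟨fun s ↦ W s.1 s.2, fun s ↦ W_ne s.1 s.2, ?_, fun B hB hlen ↦ ?_⟩
  · simp only [valuesOn_prod, spokes, ← Multiset.coe_mapAddMonoidHom, map_sum, totalEdges]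
    exact sum_le_sum fun i _ ↦ by simpa using W_le i
  have hlen' i (hi : ({σ | (i, σ) ∈ B} : Finset Bool) = univ) : 2 ≤ (X i).verts.length := by
    simp only [filter_eq_self, mem_univ, true_imp_iff] at hi
    exact hlen i (hi _) (hi _)
  choose X' hX' using fun i ↦ hW i {σ | (i, σ) ∈ B} (by simpa using fun σ ↦ hB (i, σ)) (hlen' i)
  choose k hk using fun i ↦ (hX' i).ends_add
  refine ⟨X', fun i ↦ (hX' i).length_le, ?_, ∑ i, k i, ?_⟩
  · simp only [valuesOn_prod B, spokes, ← Multiset.coe_mapAddMonoidHom, map_sum, totalEdges,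
      ← sum_add_distrib]
    exact sum_congr rfl fun i _ ↦ (hX' i).edges_add
  · have replicate_sum : Multiset.replicate (∑ i, k i) p = ∑ i, Multiset.replicate (k i) p :=
      map_sum (Multiset.replicateAddMonoidHom p) k univ
    simp only [totalEnds_eq_sum, valuesOn_prod B, replicate_sum, ← sum_add_distrib]
    exact sum_congr rfl fun i _ ↦ hk i

lemma valuesOn_slotEnd_le (X : ι → PathOrCycle V) (A : Finset (ι × Bool)) :
    valuesOn A (slotEnd X) ≤ totalEnds X :=
  sum_le_sum_of_subset (subset_univ A)

lemma card_ends (x : PathOrCycle V) : Multiset.card x.ends = if x.isCycle then 0 else 2 := by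
  cases h : x.isCycle <;>
    simp [ends, valuesOn, endAt, h, List.head?_eq_some_head x.ne_nil,
      List.getLast?_eq_some_getLast x.ne_nil]

lemma even_card_totalEnds (X : ι → PathOrCycle V) : Even (Multiset.card (totalEnds X)) := by
  rw [totalEnds_eq_sum, Multiset.card_sum]
  refine even_sum _ fun i _ ↦ ?_
  rw [card_ends]
  split_ifs <;> decide

lemma card_totalEnds_le (X : ι → PathOrCycle V) :
    Multiset.card (totalEnds X) ≤ 2 * Fintype.card ι := by
  rw [totalEnds_eq_sum, Multiset.card_sum, mul_comm]
  refine sum_le_card_nsmul _ _ 2 fun i _ ↦ ?_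
  rw [card_ends]
  split_ifs <;> decide

variable [DecidableEq V]

lemma exists_slots_of_reroute (X : ι → PathOrCycle V) {W : ι × Bool → Option V}
    {A : Finset (ι × Bool)} (count_W_le : ∀ w, (valuesOn univ W).count w ≤ 1)
    (hA : ∀ s ∈ A, slotEnd X s ≠ none ∧ ∀ t, W t ≠ slotEnd X s)
    (hlen : ∀ i, (i, false) ∈ A → (i, true) ∈ A → 2 ≤ (X i).verts.length) :
    ∃ B : Finset (ι × Bool), (∀ s ∈ B, s ∈ A ∨ ∃ t, W t ≠ none ∧ slotEnd X s = W t) ∧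
      (∀ i, (i, false) ∈ B → (i, true) ∈ B → 2 ≤ (X i).verts.length) ∧
      ∀ w ∈ totalEnds X, (valuesOn B (slotEnd X)).count w =
        (valuesOn B W).count w + (valuesOn A (slotEnd X)).count w := by
  obtain ⟨B, B_new, eq_of_end_eq, count_B⟩ := exists_superset_count_valuesOn (slotEnd X) W
    (A := A) (fun s hs t w hw ↦ hw ▸ (hA s hs).2 t) count_W_le
  refine ⟨B, fun s hs ↦ or_iff_not_imp_left.2 fun hsA ↦ ?_, fun i h₀ h₁ ↦ ?_, fun w hw ↦ ?_⟩
  · obtain ⟨t, w, ht, hw⟩ := B_new s hs hsA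
    exact ⟨t, by simp [ht], hw.trans ht.symm⟩
  · by_contra! h
    have hends : slotEnd X (i, false) = slotEnd X (i, true) := by
      by_contra! hne
      exact h.not_ge (two_le_length_of_endAt_ne hne)
    refine h.not_ge (hlen i ?_ ?_) <;> by_contra hA
    · simpa using eq_of_end_eq _ h₀ hA _ h₁ hends
    · simpa using eq_of_end_eq _ h₁ hA _ h₀ hends.symm
  · obtain ⟨s, -, hs⟩ := mem_valuesOn.1 hw
    exact count_B w ⟨s, hs⟩

lemma count_spokes_self (m : Multiset V) (w p : V) : (spokes p m).count s(w, p) = m.count w :=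
  Multiset.count_map_eq_count' _ _ (fun _ _ h ↦ Sym2.congr_left.1 h) _

lemma count_spokes_of_notMem (m : Multiset V) {p : V} {e : Sym2 V} (h : p ∉ e) :
    (spokes p m).count e = 0 :=
  Multiset.count_eq_zero.2 fun he ↦ by
    obtain ⟨w, -, rfl⟩ := Multiset.mem_map.1 he
    exact h (Sym2.mem_mk_right w p)

/-- `X'` arises from `X` by moving the path ends in the slots `A` to `p`, at the cost of further
changes at `p` that keep, for every other vertex, the multiplicity of its edge to `p` plus the
number of its path ends. -/
structure MovesEnds (p : V) (A : Finset (ι × Bool)) (X X' : ι → PathOrCycle V) : Prop where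
  length_le : ∀ i, (X i).verts.length ≤ (X' i).verts.length
  count_edge_of_notMem : ∀ e, p ∉ e → (totalEdges X').count e = (totalEdges X).count e
  count_edge_add_count_end : ∀ w, w ≠ p →
    (totalEdges X').count s(w, p) + (totalEnds X').count w =
      (totalEdges X).count s(w, p) + (totalEnds X).count w
  count_edge_of_mem_ends : ∀ w, w = p ∨ w ∈ totalEnds X →
    (totalEdges X').count s(w, p) =
      (totalEdges X).count s(w, p) + (valuesOn A (slotEnd X)).count w
  count_end_le : (totalEnds X).count p ≤ (totalEnds X').count p

lemma movesEnds_of_reroute {X X' : ι → PathOrCycle V} {p : V} {A B : Finset (ι × Bool)}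
    {W : ι × Bool → Option V} {k : ℕ} (length_le : ∀ i, (X i).verts.length ≤ (X' i).verts.length)
    (edges_eq : totalEdges X' + spokes p (valuesOn B W) =
      totalEdges X + spokes p (valuesOn B (slotEnd X)))
    (ends_eq : totalEnds X' + valuesOn B (slotEnd X) =
      totalEnds X + valuesOn B W + Multiset.replicate k p)
    (hA : ∀ s ∈ A, slotEnd X s ≠ some p) (hB : ∀ s ∈ B, slotEnd X s ≠ some p)
    (hW : ∀ s, W s ≠ some p)
    (count_B : ∀ w ∈ totalEnds X, (valuesOn B (slotEnd X)).count w =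
      (valuesOn B W).count w + (valuesOn A (slotEnd X)).count w) :
    MovesEnds p A X X' := by
  have count_eq_zero {C : Finset (ι × Bool)} {f : ι × Bool → Option V}
      (hf : ∀ s ∈ C, f s ≠ some p) : (valuesOn C f).count p = 0 :=
    Multiset.count_eq_zero.2 (by simpa [mem_valuesOn] using hf)
  have count_edges e := congrArg (Multiset.count e) edges_eq
  have count_ends w := congrArg (Multiset.count w) ends_eq
  simp only [Multiset.count_add] at count_edges count_ends
  have count_edges_self w := count_edges s(w, p)
  simp only [count_spokes_self] at count_edges_self
  refine ⟨length_le, fun e he ↦ ?_, fun w hw ↦ ?_, fun w hw ↦ ?_, ?_⟩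
  · simpa [count_spokes_of_notMem _ he] using count_edges e
  · have : (Multiset.replicate k p).count w = 0 := by simp [Multiset.count_replicate, hw.symm]
    have := count_ends w
    have := count_edges_self w
    omega
  · have := count_edges_self w
    obtain rfl | hw := hw
    · have := count_eq_zero hA
      have := count_eq_zero hB
      have := count_eq_zero fun s (_ : s ∈ B) ↦ hW s
      omega
    · have := count_B w hw
      omega
  · have := count_eq_zero hB
    have := count_ends p
    omega

theorem exists_movesEnds (X : ι → PathOrCycle V) (p : V) (A : Finset (ι × Bool))
    (hA : ∀ s ∈ A, ∃ a, slotEnd X s = some a ∧ a ≠ p ∧ s(a, p) ∉ totalEdges X)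
    (hlen : ∀ i, (i, false) ∈ A → (i, true) ∈ A → 2 ≤ (X i).verts.length)
    (count_le : ∀ w, (totalEdges X).count s(w, p) ≤ 1) :
    ∃ X', MovesEnds p A X X' := by
  obtain ⟨W, W_ne, W_le, hW⟩ := exists_reroute_family X p
  have count_W_le w : (valuesOn univ W).count w ≤ (totalEdges X).count s(w, p) :=
    count_spokes_self (valuesOn univ W) w p ▸ Multiset.count_le_of_le _ W_le
  have hA' : ∀ s ∈ A, slotEnd X s ≠ none ∧ ∀ t, W t ≠ slotEnd X s := by
    intro s hs
    obtain ⟨a, ha, -, hap⟩ := hA s hs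
    refine ⟨by simp [ha], fun t ht ↦ hap (Multiset.count_pos.1 ?_)⟩
    refine lt_of_lt_of_le (Multiset.count_pos.2 ?_) (count_W_le a)
    exact mem_valuesOn.2 ⟨t, mem_univ t, ht.trans ha⟩
  have hA_ne : ∀ s ∈ A, slotEnd X s ≠ some p := fun s hs ↦ by
    obtain ⟨a, ha, hap, -⟩ := hA s hs
    simp [ha, hap]
  obtain ⟨B, B_new, B_len, count_B⟩ :=
    exists_slots_of_reroute X (fun w ↦ (count_W_le w).trans (count_le w)) hA' hlen
  have end_ne : ∀ s ∈ B, slotEnd X s ≠ none ∧ slotEnd X s ≠ some p := by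
    intro s hs
    obtain hsA | ⟨t, ht, hst⟩ := B_new s hs
    · exact ⟨(hA' s hsA).1, hA_ne s hsA⟩
    · exact hst ▸ ⟨ht, W_ne t⟩
  obtain ⟨X', length_le, edges_eq, k, ends_eq⟩ := hW B end_ne B_len
  exact ⟨X', movesEnds_of_reroute length_le edges_eq ends_eq hA_ne (fun s hs ↦ (end_ne s hs).2) W_ne
    count_B⟩

namespace MovesEnds

variable {X X' : ι → PathOrCycle V} {p : V} {A : Finset (ι × Bool)}

lemma totalEdges_eq (h : MovesEnds p A X X')
    (mem_ends : ∀ w, s(w, p) ∈ totalEdges X → w = p ∨ w ∈ totalEnds X) :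
    totalEdges X' = totalEdges X + spokes p (valuesOn A (slotEnd X)) := by
  ext e
  rw [Multiset.count_add]
  by_cases hp : p ∈ e
  · obtain ⟨w, rfl⟩ := Sym2.mem_iff_exists.1 hp
    rw [Sym2.eq_swap, count_spokes_self]
    by_cases hw : w = p ∨ w ∈ totalEnds X
    · exact h.count_edge_of_mem_ends w hw
    · obtain ⟨hwp, hw⟩ := not_or.1 hw
      have := h.count_edge_add_count_end w hwp
      have : (totalEnds X).count w = 0 := Multiset.count_eq_zero.2 hw
      have := Multiset.count_le_of_le w (valuesOn_slotEnd_le X A)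
      have : (totalEdges X).count s(w, p) = 0 :=
        Multiset.count_eq_zero.2 fun hwe ↦ (mem_ends w hwe).elim hwp hw
      omega
  · rw [h.count_edge_of_notMem e hp, count_spokes_of_notMem _ hp, add_zero]

lemma count_totalEnds_add (h : MovesEnds p A X X')
    (mem_ends : ∀ w, s(w, p) ∈ totalEdges X → w = p ∨ w ∈ totalEnds X) {w : V} (hw : w ≠ p) :
    (totalEnds X').count w + (valuesOn A (slotEnd X)).count w = (totalEnds X).count w := by
  have := h.count_edge_add_count_end w hw
  rw [h.totalEdges_eq mem_ends, Multiset.count_add, count_spokes_self] at this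
  omega

end MovesEnds

lemma eq_of_count_eq_of_even_card {S T : Multiset V} {p : V}
    (h : ∀ w, w ≠ p → S.count w = T.count w) (hp : T.count p ≤ S.count p + 1)
    (card_le : Multiset.card S ≤ Multiset.card T) (hS : Even (Multiset.card S))
    (hT : Even (Multiset.card T)) : S = T := by
  have filter_eq : S.filter (p ≠ ·) = T.filter (p ≠ ·) := by
    ext w
    by_cases hw : p = w
    · simp [hw]
    · simp [hw, h w (Ne.symm hw)]
  have card_filter_add (R : Multiset V) :
      R.count p + Multiset.card (R.filter (p ≠ ·)) = Multiset.card R := by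
    rw [Multiset.count, Multiset.countP_eq_card_filter, ← Multiset.card_add]
    exact congrArg _ (Multiset.filter_add_not (p = ·) R)
  have count_eq : S.count p = T.count p := by
    have hS' := card_filter_add S
    have hT' := card_filter_add T
    rw [filter_eq] at hS'
    rw [Nat.even_iff] at hS hT
    omega
  ext w
  obtain rfl | hw := eq_or_ne w p
  exacts [count_eq, h w hw]

end Families

/-! ### Lovász's path decomposition -/

section PathSystems

open PathOrCycle

variable [DecidableEq V] {H : SimpleGraph V} {F : Finset (Sym2 V)} {T : Multiset V} {x p : V}

/-- The degree of `v` in the graph with edge set `F`. -/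
def edgeDegree (F : Finset (Sym2 V)) (v : V) : ℕ := #{e ∈ F | v ∈ e}

lemma edgeDegree_pos {v : V} : 0 < edgeDegree F v ↔ ∃ e ∈ F, v ∈ e := by
  simp [edgeDegree, card_pos, Finset.Nonempty]

lemma edgeDegree_erase_add_count (h : s(x, p) ∈ F) (hxp : x ≠ p) (v : V) :
    edgeDegree (F.erase s(x, p)) v + ({x, p} : Multiset V).count v = edgeDegree F v := by
  rw [edgeDegree, edgeDegree, filter_erase]
  by_cases hv : v = x ∨ v = p
  · have count_eq : ({x, p} : Multiset V).count v = 1 := by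
      rcases hv with rfl | rfl <;> simp [hxp, hxp.symm]
    rw [count_eq]
    exact card_erase_add_one (by simp [h, hv])
  · rw [erase_eq_of_notMem (by simp [hv])]
    simpa using hv

/-- The conditions on a multiset `T`, relative to a graph `H` with `F ⊆ E(H)`, under which Lovász'
argument decomposes `F` into paths and cycles whose ends form `T`: the parity of `T` is that of the
degrees in `F`, and a component of `H` has at most one non-isolated vertex of `F` outside `T`. -/
structure AdmissibleEnds (H : SimpleGraph V) (F : Finset (Sym2 V)) (T : Multiset V) : Prop where
  mem_edgeSet : ∀ e ∈ F, e ∈ H.edgeSet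
  even_add : ∀ v, Even (edgeDegree F v + T.count v)
  eq_of_reachable : ∀ u v, H.Reachable u v → 0 < edgeDegree F u → 0 < edgeDegree F v →
    u ∉ T → v ∉ T → u = v

namespace AdmissibleEnds

lemma exists_edge (h : AdmissibleEnds H F T) (hF : F.Nonempty) :
    ∃ x p, s(x, p) ∈ F ∧ p ∈ T ∧ ∀ w, H.Reachable w x → 0 < edgeDegree F w → w ∉ T → w = x := by
  have mem_or_mem {u v : V} (huv : s(u, v) ∈ F) : u ∈ T ∨ v ∈ T := by
    have adj : H.Adj u v := h.mem_edgeSet _ huv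
    by_contra! hT
    exact adj.ne (h.eq_of_reachable u v adj.reachable (edgeDegree_pos.2 ⟨_, huv, by simp⟩)
      (edgeDegree_pos.2 ⟨_, huv, by simp⟩) hT.1 hT.2)
  obtain ⟨⟨u, v⟩, huv⟩ := hF
  by_cases hw : ∃ w, H.Reachable w u ∧ 0 < edgeDegree F w ∧ w ∉ T
  · obtain ⟨x, -, hx, hxT⟩ := hw
    obtain ⟨e, he, hxe⟩ := edgeDegree_pos.1 hx
    obtain ⟨p, rfl⟩ := Sym2.mem_iff_exists.1 hxe
    exact ⟨x, p, he, (mem_or_mem he).resolve_left hxT,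
      fun w hwx hw hwT ↦ h.eq_of_reachable w x hwx hw hx hwT hxT⟩
  · push Not at hw
    have adj : H.Adj u v := h.mem_edgeSet _ huv
    exact ⟨u, v, huv, hw v adj.reachable.symm (edgeDegree_pos.2 ⟨_, huv, Sym2.mem_mk_right u v⟩),
      fun w hwu hw' hwT ↦ absurd (hw w hwu hw') hwT⟩

lemma ne_of_mem (h : AdmissibleEnds H F T) (hxp : s(x, p) ∈ F) : x ≠ p :=
  SimpleGraph.Adj.ne (h.mem_edgeSet _ hxp)

lemma edgeDegree_pos_of_erase {e : Sym2 V} {v : V} (hv : 0 < edgeDegree (F.erase e) v) :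
    0 < edgeDegree F v := by
  obtain ⟨e', he', hve'⟩ := edgeDegree_pos.1 hv
  exact edgeDegree_pos.2 ⟨e', mem_of_mem_erase he', hve'⟩

lemma erase (h : AdmissibleEnds H F T) (hxp : s(x, p) ∈ F) (hp : p ∈ T)
    (hx : ∀ w, H.Reachable w x → 0 < edgeDegree F w → w ∉ T → w = x) :
    AdmissibleEnds H (F.erase s(x, p)) (x ::ₘ T.erase p) where
  mem_edgeSet e he := h.mem_edgeSet e (mem_of_mem_erase he)
  even_add v := by
    have count_T := congrArg (Multiset.count v) (Multiset.cons_erase hp)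
    have deg := edgeDegree_erase_add_count hxp (h.ne_of_mem hxp) v
    have even_F := h.even_add v
    simp only [Multiset.insert_eq_cons, Multiset.count_cons, Multiset.count_singleton]
      at count_T deg ⊢
    rw [Nat.even_iff] at even_F ⊢
    omega
  eq_of_reachable u v huv hu hv huT hvT := by
    have notMem {w} (hw : w ∉ x ::ₘ T.erase p) (hwp : w ≠ p) : w ∉ T := fun hwT ↦
      hw (Multiset.mem_cons_of_mem ((Multiset.mem_erase_of_ne hwp).2 hwT))
    have adj : H.Adj x p := h.mem_edgeSet _ hxp
    have not_reachable {w} (hw : w ∉ x ::ₘ T.erase p) (hwp : w ≠ p)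
        (hdeg : 0 < edgeDegree (F.erase s(x, p)) w) : ¬ H.Reachable w p := fun hreach ↦ by
      refine hw (hx w (hreach.trans adj.reachable.symm) (edgeDegree_pos_of_erase hdeg)
        (notMem hw hwp) ▸ Multiset.mem_cons_self x _)
    rcases eq_or_ne u p with hup | hup <;> rcases eq_or_ne v p with hvp | hvp
    · exact hup.trans hvp.symm
    · exact absurd (hup ▸ huv.symm) (not_reachable hvT hvp hv)
    · exact absurd (hvp ▸ huv) (not_reachable huT hup hu)
    · exact h.eq_of_reachable u v huv (edgeDegree_pos_of_erase hu) (edgeDegree_pos_of_erase hv)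
        (notMem huT hup) (notMem hvT hvp)

lemma mem_of_mem_erase_edge (h : AdmissibleEnds H F T) (hxp : s(x, p) ∈ F)
    (hx : ∀ w, H.Reachable w x → 0 < edgeDegree F w → w ∉ T → w = x) {w : V}
    (hw : s(w, p) ∈ F.erase s(x, p)) : w ∈ x ::ₘ T.erase p := by
  have hwF := mem_of_mem_erase hw
  have adj_w : H.Adj w p := h.mem_edgeSet _ hwF
  have adj_x : H.Adj x p := h.mem_edgeSet _ hxp
  have hwT : w ∈ T := by
    by_contra hwT
    have := hx w (adj_w.reachable.trans adj_x.reachable.symm)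
      (edgeDegree_pos.2 ⟨_, hwF, Sym2.mem_mk_left w p⟩) hwT
    exact ne_of_mem_erase hw (this ▸ rfl)
  exact Multiset.mem_cons_of_mem ((Multiset.mem_erase_of_ne adj_w.ne).2 hwT)

end AdmissibleEnds

lemma exists_singleton_paths (hT : ∀ v, Even (T.count v)) :
    ∃ (ι : Type u) (_ : Fintype ι) (X : ι → PathOrCycle V),
      totalEdges X = 0 ∧ totalEnds X = T ∧ Multiset.card T = 2 * Fintype.card ι := by
  obtain ⟨S, rfl⟩ := T.exists_smul_of_dvd_count (k := 2) fun v _ ↦ (hT v).two_dvd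
  refine ⟨S, inferInstance, fun i ↦ ⟨[(i : V)], false, by simp, by simp, by simp⟩, ?_, ?_, by simp⟩
  · simp [totalEdges, edges, pathEdges]
  · have ends_eq (v : V) :
        (⟨[v], false, by simp, by simp, by simp⟩ : PathOrCycle V).ends = 2 • {v} := rfl
    simp only [totalEnds_eq_sum, ends_eq, ← smul_sum]
    rw [sum_eq_multiset_sum, Multiset.map_univ S fun v ↦ ({v} : Multiset V),
      Multiset.sum_map_singleton]

lemma exists_attach_edge {ι : Type u} [Fintype ι] {X : ι → PathOrCycle V}
    (hx : x ∈ totalEnds X) (hxp : x ≠ p) (nodup : (s(x, p) ::ₘ totalEdges X).Nodup)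
    (mem_ends : ∀ w, s(w, p) ∈ totalEdges X → w ∈ totalEnds X) :
    ∃ X' : ι → PathOrCycle V, totalEdges X' = s(x, p) ::ₘ totalEdges X ∧
      (∀ w, w ≠ p → (totalEnds X').count w + ({x} : Multiset V).count w = (totalEnds X).count w) ∧
      (totalEnds X).count p ≤ (totalEnds X').count p := by
  obtain ⟨s, -, hs⟩ := mem_valuesOn.1 hx
  obtain ⟨notMem, nodup⟩ := Multiset.nodup_cons.1 nodup
  have moved : valuesOn {s} (slotEnd X) = {x} := by simp [valuesOn, hs]
  obtain ⟨X', hX'⟩ := exists_movesEnds X p {s} (by simp [hs, hxp, notMem])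
    (by simp only [mem_singleton]; rintro i rfl h; simp at h)
    fun w ↦ Multiset.nodup_iff_count_le_one.1 nodup _
  have mem_ends' w (hw : s(w, p) ∈ totalEdges X) : w = p ∨ w ∈ totalEnds X := .inr (mem_ends w hw)
  refine ⟨X', ?_, fun w hw ↦ ?_, hX'.count_end_le⟩
  · rw [hX'.totalEdges_eq mem_ends', moved, add_comm]
    rfl
  · rw [← moved, hX'.count_totalEnds_add mem_ends' hw]

theorem exists_pathSystem_of_admissibleEnds (h : AdmissibleEnds H F T) :
    ∃ (ι : Type u) (_ : Fintype ι) (X : ι → PathOrCycle V),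
      totalEdges X = F.val ∧ totalEnds X = T ∧ Multiset.card T = 2 * Fintype.card ι := by
  induction hn : #F generalizing F T with
  | zero =>
    obtain rfl := card_eq_zero.1 hn
    exact exists_singleton_paths fun v ↦ by simpa [edgeDegree] using h.even_add v
  | succ n ih =>
    obtain ⟨x, p, hxp, hp, hx⟩ := h.exists_edge (card_pos.1 (hn ▸ n.succ_pos))
    have hne := h.ne_of_mem hxp
    obtain ⟨ι, _, X, edges_eq, ends_eq, card_eq⟩ :=
      ih (h.erase hxp hp hx) (by rw [card_erase_of_mem hxp, hn]; rfl)
    have cons_edges : s(x, p) ::ₘ totalEdges X = F.val := by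
      rw [edges_eq, erase_val, Multiset.cons_erase hxp]
    have card_T : Multiset.card T = 2 * Fintype.card ι := by
      rw [← card_eq, Multiset.card_cons, Multiset.card_erase_add_one hp]
    obtain ⟨X', edges_eq', count_ends, count_p⟩ :=
      exists_attach_edge (ends_eq ▸ Multiset.mem_cons_self x _) hne (cons_edges ▸ F.nodup)
        fun w hw ↦ ends_eq ▸ h.mem_of_mem_erase_edge hxp hx (by rwa [edges_eq] at hw)
    refine ⟨ι, inferInstance, X', edges_eq'.trans cons_edges,
      eq_of_count_eq_of_even_card (p := p) (fun w hw ↦ ?_) ?_ (card_T ▸ card_totalEnds_le X')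
        (even_card_totalEnds X') (card_T ▸ even_two_mul _), card_T⟩
    · have := count_ends w hw
      rw [ends_eq, Multiset.count_cons, Multiset.count_singleton,
        Multiset.count_erase_of_ne hw] at this
      omega
    · rw [ends_eq, Multiset.count_cons_of_ne hne.symm, Multiset.count_erase_self] at count_p
      omega

end PathSystems

/-- A rooted spanning forest of `G` as found by breadth-first search from one root per component:
`rank` is the order of discovery, the parent of a vertex is its first neighbour, and roots are
their own parents. -/
structure SearchForest (G : SimpleGraph V) (α : Type*) [LinearOrder α] where
  rank : V → α
  rank_injective : Function.Injective rank
  parent : V → V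
  adj_parent : ∀ {v}, parent v ≠ v → G.Adj v (parent v)
  rank_parent_lt : ∀ {v}, parent v ≠ v → rank (parent v) < rank v
  rank_parent_le : ∀ {v w}, parent v ≠ v → G.Adj v w → rank (parent v) ≤ rank w
  rank_le_of_reachable : ∀ {r v}, parent r = r → G.Reachable r v → rank r ≤ rank v

namespace SearchForest

section Basic

variable {G : SimpleGraph V} {α : Type*} [LinearOrder α] (T : SearchForest G α) {r v : V}

lemma eq_of_reachable {r' : V} (hr : T.parent r = r) (hr' : T.parent r' = r')
    (h : G.Reachable r r') : r = r' :=
  T.rank_injective ((T.rank_le_of_reachable hr h).antisymm (T.rank_le_of_reachable hr' h.symm))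

lemma parent_eq_of_adj (hr : T.parent r = r) (h : G.Adj v r) : T.parent v = r := by
  have hv : T.parent v ≠ v := fun hv ↦ h.ne (T.eq_of_reachable hv hr h.reachable)
  refine T.rank_injective (le_antisymm (T.rank_parent_le hv h) (T.rank_le_of_reachable hr ?_))
  exact h.symm.reachable.trans (T.adj_parent hv).reachable

lemma exists_root [Finite V] [Nonempty V] : ∃ r, T.parent r = r := by
  obtain ⟨r, hr⟩ := Finite.exists_min T.rank
  exact ⟨r, by_contra fun h ↦ (T.rank_parent_lt h).not_ge (hr _)⟩

end Basic

lemma exists_of_rank [Finite V] {G : SimpleGraph V} {α : Type*} [LinearOrder α] (rank : V → α)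
    (rank_injective : Function.Injective rank)
    (h : ∀ r, (∀ v, G.Adj r v → rank r ≤ rank v) → ∀ v, G.Reachable r v → rank r ≤ rank v) :
    Nonempty (SearchForest G α) := by
  have exists_parent v : ∃ w, (w = v ∧ ∀ u, G.Adj v u → rank v ≤ rank u) ∨
      (G.Adj v w ∧ rank w < rank v ∧ ∀ u, G.Adj v u → rank w ≤ rank u) := by
    by_cases hv : ∀ u, G.Adj v u → rank v ≤ rank u
    · exact ⟨v, .inl ⟨rfl, hv⟩⟩
    · push Not at hv
      obtain ⟨u, hvu, hu⟩ := hv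
      obtain ⟨w, hvw, hw⟩ := Set.exists_min_image (G.neighborSet v) rank (Set.toFinite _) ⟨u, hvu⟩
      exact ⟨w, .inr ⟨hvw, (hw u hvu).trans_lt hu, hw⟩⟩
  choose parent h_parent using exists_parent
  have of_ne {v} (hv : parent v ≠ v) := (h_parent v).resolve_left fun h ↦ hv h.1
  refine ⟨⟨rank, rank_injective, parent, fun hv ↦ (of_ne hv).1, fun hv ↦ (of_ne hv).2.1,
    fun hv hvw ↦ (of_ne hv).2.2 _ hvw, fun {r v} hr ↦ h r ?_ v⟩⟩
  obtain ⟨-, hr'⟩ | ⟨hr', -⟩ := h_parent r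
  exacts [hr', absurd hr hr'.ne']

theorem nonempty_searchForest [Fintype V] (G : SimpleGraph V) :
    Nonempty (SearchForest G (ℕ ×ₗ Fin (Fintype.card V))) := by
  let depth v := G.dist (G.connectedComponentMk v).out v
  have reachable_out v : G.Reachable (G.connectedComponentMk v).out v :=
    SimpleGraph.ConnectedComponent.exact (Quot.out_eq _)
  have eq_out {v} (hv : depth v = 0) : v = (G.connectedComponentMk v).out :=
    ((reachable_out v).dist_eq_zero_iff.1 hv).symm
  have depth_eq_zero {r} (hr : ∀ v, G.Adj r v → depth r ≤ depth v) : depth r = 0 := by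
    obtain ⟨w, hw⟩ := (reachable_out r).symm.exists_walk_length_eq_dist
    by_contra hne
    have not_nil : ¬w.Nil := fun h ↦ hne <| by
      rw [← SimpleGraph.Walk.length_eq_zero_iff, hw, SimpleGraph.dist_comm] at h
      exact h
    have out_eq : G.connectedComponentMk w.snd = G.connectedComponentMk r :=
      SimpleGraph.ConnectedComponent.sound (w.adj_snd not_nil).symm.reachable
    have depth_snd : depth w.snd ≤ w.tail.length := by
      simp only [depth]
      rw [SimpleGraph.dist_comm, out_eq]
      exact SimpleGraph.dist_le w.tail
    have := hr _ (w.adj_snd not_nil)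
    have := w.length_tail_add_one not_nil
    rw [hw, SimpleGraph.dist_comm] at this
    change _ = depth r at this
    omega
  refine exists_of_rank (fun v ↦ toLex (depth v, Fintype.equivFin V v)) (fun u v huv ↦ ?_) ?_
  · simpa using congrArg (fun x ↦ (ofLex x).2) huv
  · intro r hr v hv
    have hr0 := depth_eq_zero fun v hv ↦ (Prod.Lex.toLex_le_toLex'.1 (hr v hv)).1
    refine Prod.Lex.toLex_le_toLex'.2 ⟨by simp [hr0], fun h ↦ ?_⟩
    have : r = v := by
      rw [eq_out hr0, eq_out (h.symm.trans hr0), SimpleGraph.ConnectedComponent.sound hv]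
    rw [this]

end SearchForest

section ForestRemoval

variable [DecidableEq V]

lemma exists_odd_edgeDegree_sdiff {α : Type*} [LinearOrder α] (rank : V → α) (parent : V → V)
    (F : Finset (Sym2 V)) (s : Finset V)
    (hs : ∀ v ∈ s, s(v, parent v) ∈ F ∧ rank (parent v) < rank v) :
    ∃ J ⊆ s.image fun v ↦ s(v, parent v), ∀ v ∈ s, Odd (edgeDegree (F \ J) v) := by
  induction s using Finset.induction_on_min_value rank with
  | empty => exact ⟨∅, by simp⟩
  | insert a s ha a_le ih =>
    obtain ⟨haF, rank_lt⟩ := hs a (mem_insert_self a s)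
    obtain ⟨J, hJ, odd_J⟩ := ih fun v hv ↦ hs v (mem_insert_of_mem hv)
    have parent_notMem : parent a ∉ s := fun h ↦ rank_lt.not_ge (a_le _ h)
    have edge_mem : s(a, parent a) ∈ F \ J := by
      refine mem_sdiff.2 ⟨haF, fun h ↦ ?_⟩
      obtain ⟨v, hv, hva⟩ := mem_image.1 (hJ h)
      grind
    have degree := edgeDegree_erase_add_count edge_mem (ne_of_apply_ne rank rank_lt.ne')
    rw [← sdiff_insert] at degree
    by_cases hodd : Odd (edgeDegree (F \ J) a)
    · refine ⟨J, hJ.trans (image_mono _ (subset_insert a s)), fun v hv ↦ ?_⟩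
      obtain rfl | hv := mem_insert.1 hv
      exacts [hodd, odd_J v hv]
    · refine ⟨insert s(a, parent a) J, ?_, fun v hv ↦ ?_⟩
      · rw [image_insert]
        exact insert_subset_insert _ hJ
      · have degree_v := degree v
        rw [Multiset.insert_eq_cons, Multiset.count_cons, Multiset.count_singleton] at degree_v
        obtain rfl | hv := mem_insert.1 hv
        · rw [← Nat.not_even_iff_odd] at hodd ⊢
          grind
        · have := odd_J v hv
          grind

theorem exists_pathSystem_add_forest [Fintype V] (H : SimpleGraph V) [Fintype H.edgeSet] :
    ∃ J ⊆ H.edgeFinset, ∃ (ι : Type u) (_ : Fintype ι) (X : ι → PathOrCycle V),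
      totalEdges X = (H.edgeFinset \ J).val ∧
      totalEnds X = ({v | Odd (edgeDegree (H.edgeFinset \ J) v)} : Finset V).val ∧
      Multiset.card (totalEnds X) = 2 * Fintype.card ι ∧
      #J + #{v | v ∉ totalEnds X} ≤ Fintype.card V := by
  obtain ⟨T⟩ := SearchForest.nonempty_searchForest H
  obtain ⟨J, hJ, odd_J⟩ := exists_odd_edgeDegree_sdiff T.rank T.parent H.edgeFinset
    {v | T.parent v ≠ v} fun v hv ↦ by
      have hv := (mem_filter_univ v).1 hv
      exact ⟨SimpleGraph.mem_edgeFinset.2 (T.adj_parent hv), T.rank_parent_lt hv⟩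
  set F := H.edgeFinset \ J
  have admissible : AdmissibleEnds H F ({v | Odd (edgeDegree F v)} : Finset V).val := by
    have root {v} (hv : v ∉ ({v | Odd (edgeDegree F v)} : Finset V).val) : T.parent v = v := by
      by_contra hne
      exact hv ((mem_filter_univ v).2 (odd_J v ((mem_filter_univ v).2 hne)))
    refine ⟨fun e he ↦ SimpleGraph.mem_edgeFinset.1 (mem_sdiff.1 he).1, fun v ↦ ?_,
      fun u v huv _ _ hu hv ↦ T.eq_of_reachable (root hu) (root hv) huv⟩
    by_cases hv : Odd (edgeDegree F v)
    · rw [Multiset.count_eq_one_of_mem (nodup _) (by simpa using hv)]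
      exact hv.add_one
    · rw [Multiset.count_eq_zero_of_notMem (by simpa using hv)]
      exact Nat.not_odd_iff_even.1 hv
  obtain ⟨ι, _, X, edges_eq, ends_eq, card_eq⟩ := exists_pathSystem_of_admissibleEnds admissible
  refine ⟨J, ?_, ι, inferInstance, X, edges_eq, ends_eq, ends_eq ▸ card_eq, ?_⟩
  · refine hJ.trans (image_subset_iff.2 fun v hv ↦ ?_)
    exact SimpleGraph.mem_edgeFinset.2 (T.adj_parent (mem_filter.1 hv).2)
  · have card_J := (card_le_card hJ).trans card_image_le
    have : ({v | v ∉ totalEnds X} : Finset V) ⊆ ({v | ¬T.parent v ≠ v} : Finset V) := fun v ↦ by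
      simp only [mem_filter_univ, ends_eq]
      exact fun hv h ↦ hv ((mem_filter_univ v).2 (odd_J v ((mem_filter_univ v).2 h)))
    have := card_le_card this
    have := card_filter_add_card_filter_not (s := (univ : Finset V)) fun v ↦ T.parent v ≠ v
    rw [card_univ] at this
    omega

end ForestRemoval

/-! ### Gathering the path ends at the roots -/

section Gathering

variable [DecidableEq V] {ι : Type u} [Fintype ι] {X X' : ι → PathOrCycle V} {C : Finset V}
  {p w : V}

/-- The slots of `X` whose end lies in `C`. -/
def endSlots (X : ι → PathOrCycle V) (C : Finset V) : Finset (ι × Bool) :=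
  {t | ∃ a ∈ C, slotEnd X t = some a}

lemma count_valuesOn_endSlots_of_mem (hw : w ∈ C) :
    (valuesOn (endSlots X C) (slotEnd X)).count w = (totalEnds X).count w := by
  rw [count_valuesOn, count_valuesOn, endSlots, filter_filter]
  congr 1
  ext t
  simp only [mem_filter_univ, and_iff_right_iff_imp]
  exact fun ht ↦ ⟨w, hw, ht⟩

lemma count_valuesOn_endSlots_of_notMem (hw : w ∉ C) :
    (valuesOn (endSlots X C) (slotEnd X)).count w = 0 := by
  refine Multiset.count_eq_zero.2 fun h ↦ hw ?_
  obtain ⟨t, ht, htw⟩ := mem_valuesOn.1 h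
  obtain ⟨a, ha, hta⟩ := (mem_filter_univ t).1 ht
  rwa [Option.some_injective _ (htw.symm.trans hta)]

namespace MovesEnds

variable (h : MovesEnds p (endSlots X C) X X')
include h

lemma mem_totalEdges_iff {e : Sym2 V} (he : p ∉ e) : e ∈ totalEdges X' ↔ e ∈ totalEdges X := by
  rw [← Multiset.count_pos, h.count_edge_of_notMem e he, Multiset.count_pos]

lemma count_edge_le (hw : w ∉ C) :
    (totalEdges X').count s(w, p) ≤ (totalEdges X).count s(w, p) := by
  by_cases hw' : w = p ∨ w ∈ totalEnds X
  · rw [h.count_edge_of_mem_ends w hw', count_valuesOn_endSlots_of_notMem hw, add_zero]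
  · obtain ⟨hwp, hw'⟩ := not_or.1 hw'
    have := h.count_edge_add_count_end w hwp
    have := Multiset.count_eq_zero.2 hw'
    omega

lemma mem_of_mem_totalEdges (hw : w ∉ C) (hwp : s(w, p) ∈ totalEdges X') :
    s(w, p) ∈ totalEdges X :=
  Multiset.count_pos.1 ((Multiset.count_pos.2 hwp).trans_le (h.count_edge_le hw))

lemma count_eq_of_mem_totalEnds (hwp : w ≠ p) (hwC : w ∉ C) (hw : w ∈ totalEnds X) :
    (totalEdges X').count s(w, p) = (totalEdges X).count s(w, p) ∧
      (totalEnds X').count w = (totalEnds X).count w := by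
  have := h.count_edge_of_mem_ends w (.inr hw)
  have := h.count_edge_add_count_end w hwp
  have := count_valuesOn_endSlots_of_notMem (X := X) hwC
  omega

lemma mem_totalEnds (hwC : w ∉ C) (hw : w ∈ totalEnds X) : w ∈ totalEnds X' := by
  obtain rfl | hwp := eq_or_ne w p
  · exact Multiset.count_pos.1 ((Multiset.count_pos.2 hw).trans_le h.count_end_le)
  · rwa [← Multiset.count_pos, (h.count_eq_of_mem_totalEnds hwp hwC hw).2, Multiset.count_pos]

lemma notMem_totalEnds (hwp : w ≠ p) (hwC : w ∈ C) (hw : s(w, p) ∉ totalEdges X) :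
    w ∉ totalEnds X' := by
  have count_edge := Multiset.count_eq_zero.2 hw
  have := h.count_edge_add_count_end w hwp
  rw [← Multiset.count_eq_zero]
  by_cases hw' : w ∈ totalEnds X
  · have := h.count_edge_of_mem_ends w (.inr hw')
    have := count_valuesOn_endSlots_of_mem (X := X) hwC
    omega
  · have := Multiset.count_eq_zero.2 hw'
    omega

lemma edge_mem_totalEdges (hwC : w ∈ C) (hw : w ∈ totalEnds X) : s(w, p) ∈ totalEdges X' := by
  rw [← Multiset.count_pos, h.count_edge_of_mem_ends w (.inr hw),
    count_valuesOn_endSlots_of_mem hwC]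
  have := Multiset.count_pos.2 hw
  omega

lemma mem_totalEdges_or_mem_totalEnds_iff (hwp : w ≠ p) (hw : w ∉ totalEnds X) :
    s(w, p) ∈ totalEdges X' ∨ w ∈ totalEnds X' ↔ s(w, p) ∈ totalEdges X := by
  have := h.count_edge_add_count_end w hwp
  have := Multiset.count_eq_zero.2 hw
  simp only [← Multiset.count_pos]
  omega

end MovesEnds

end Gathering

namespace SearchForest

variable [Fintype V] [DecidableEq V] {G : SimpleGraph V} {α : Type*} [LinearOrder α]
  (T : SearchForest G α) {s : Finset V} {p v : V}

/-- The children of `p` in the forest; a root is not a child of itself. -/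
def children (p : V) : Finset V := {v | T.parent v ≠ v ∧ T.parent v = p}

/-- The vertices, other than roots, whose parent has not been processed, where `s` is the set of
processed vertices. -/
def pending (s : Finset V) : Finset V := {v | T.parent v ≠ v ∧ T.parent v ∉ s}

variable {T}

lemma mem_children : v ∈ T.children p ↔ T.parent v ≠ v ∧ T.parent v = p := mem_filter_univ v

lemma mem_pending : v ∈ T.pending s ↔ T.parent v ≠ v ∧ T.parent v ∉ s := mem_filter_univ v

lemma mem_pending_insert :
    v ∈ T.pending (insert p s) ↔ v ∈ T.pending s ∧ v ∉ T.children p := by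
  grind [mem_pending, mem_children]

lemma adj_of_mem_children (hv : v ∈ T.children p) : G.Adj v p :=
  (mem_children.1 hv).2 ▸ T.adj_parent (mem_children.1 hv).1

lemma children_subset_pending (hs : ∀ x ∈ s, T.rank p < T.rank x) :
    T.children p ⊆ T.pending s := by
  intro w hw
  obtain ⟨hne, hwp⟩ := mem_children.1 hw
  exact mem_pending.2 ⟨hne, fun hmem ↦ (hs p (hwp ▸ hmem)).false⟩

lemma self_mem_pending_insert (hs : ∀ x ∈ s, T.rank p < T.rank x) (hp : T.parent p ≠ p) :
    p ∈ T.pending (insert p s) := by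
  refine mem_pending.2 ⟨hp, fun hmem ↦ ?_⟩
  exact (hs _ ((mem_insert.1 hmem).resolve_left hp)).not_gt (T.rank_parent_lt hp)

end SearchForest

section PartialCover

open SearchForest

variable [Fintype V] [DecidableEq V] {G : SimpleGraph V} {α : Type*} [LinearOrder α]
  {ι : Type u} [Fintype ι]

/-- The pending vertices at which no path of `X` ends. -/
def idle (T : SearchForest G α) (s : Finset V) (X : ι → PathOrCycle V) : Finset V :=
  {v ∈ T.pending s | v ∉ totalEnds X}

lemma mem_idle {T : SearchForest G α} {s : Finset V} {X : ι → PathOrCycle V} {v : V} :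
    v ∈ idle T s X ↔ v ∈ T.pending s ∧ v ∉ totalEnds X := mem_filter

/-- The edges to `p` that are covered by single edges after `p` has been processed, turning `X` into
`X'`; they are charged to the vertices that have ceased to be idle. -/
def newSingles (T : SearchForest G α) (s : Finset V) (p : V) (X X' : ι → PathOrCycle V) :
    Finset (Sym2 V) :=
  ((idle T s X \ idle T (insert p s) X').erase p).image (s(·, p))

/-- The invariant of the construction after the vertices in `s` have been processed: `X` and `E`
cover `G` up to the tree edges of the pending vertices, and the ends of `X` lie at roots and pending
vertices. -/
structure PartialCover (T : SearchForest G α) (s : Finset V) (X : ι → PathOrCycle V)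
    (E : Finset (Sym2 V)) : Prop where
  two_le_length : ∀ i, 2 ≤ (X i).verts.length
  totalEdges_subset : ∀ e ∈ totalEdges X, e ∈ G.edgeSet
  singles_subset : ∀ e ∈ E, e ∈ G.edgeSet
  root_or_pending : ∀ v ∈ totalEnds X, T.parent v = v ∨ v ∈ T.pending s
  treeEdge_notMem : ∀ v ∈ T.pending s, s(v, T.parent v) ∉ totalEdges X
  count_le_one : ∀ e, (∀ v, T.parent v ≠ v → e ≠ s(v, T.parent v)) → (totalEdges X).count e ≤ 1
  covered : ∀ e ∈ G.edgeSet, e ∈ totalEdges X ∨ e ∈ E ∨ ∃ v ∈ T.pending s, e = s(v, T.parent v)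
  card_add_card_le : #E + #(idle T s X) ≤ Fintype.card V - 1

section Step

variable {T : SearchForest G α} {s : Finset V} {X X' : ι → PathOrCycle V} {p w : V}

section Counting

variable (hX' : MovesEnds p (endSlots X (T.children p)) X X')
include hX'

lemma idle_insert_subset : idle T (insert p s) X' ⊆ idle T s X := by
  intro v hv
  obtain ⟨hv, hvX'⟩ := mem_idle.1 hv
  obtain ⟨pending, hchild⟩ := mem_pending_insert.1 hv
  exact mem_idle.2 ⟨pending, fun hvX ↦ hvX' (hX'.mem_totalEnds hchild hvX)⟩

lemma card_newSingles_add_card_idle_le :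
    #(newSingles T s p X X') + #(idle T (insert p s) X') ≤ #(idle T s X) := by
  rw [← card_sdiff_add_card_eq_card (idle_insert_subset hX')]
  exact Nat.add_le_add_right (card_image_le.trans (card_erase_le)) _

variable (hs : ∀ x ∈ s, T.rank p < T.rank x)
include hs

lemma childEdge_mem_totalEdges_or_newSingles (hw : w ∈ T.children p) :
    s(w, p) ∈ totalEdges X' ∨ s(w, p) ∈ newSingles T s p X X' := by
  by_cases hwX : w ∈ totalEnds X
  · exact .inl (hX'.edge_mem_totalEdges hw hwX)
  · refine .inr (mem_image_of_mem _ (mem_erase.2 ⟨(adj_of_mem_children hw).ne, mem_sdiff.2 ?_⟩))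
    refine ⟨mem_idle.2 ⟨children_subset_pending hs hw, hwX⟩, fun hidle ↦ ?_⟩
    exact (mem_pending_insert.1 (mem_idle.1 hidle).1).2 hw

end Counting

namespace PartialCover

variable {E : Finset (Sym2 V)} (h : PartialCover T s X E)

section AnyVertex

variable (hX' : MovesEnds p (endSlots X (T.children p)) X X')
include h hX'

lemma totalEdges_subset_insert : ∀ e ∈ totalEdges X', e ∈ G.edgeSet := by
  intro e he
  by_cases hp : p ∈ e
  · obtain ⟨w, rfl⟩ := Sym2.mem_iff_exists.1 hp
    rw [Sym2.eq_swap] at he ⊢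
    by_cases hw : w ∈ T.children p
    exacts [adj_of_mem_children hw, h.totalEdges_subset _ (hX'.mem_of_mem_totalEdges hw he)]
  · exact h.totalEdges_subset e ((hX'.mem_totalEdges_iff hp).1 he)

lemma treeEdge_notMem_insert :
    ∀ v ∈ T.pending (insert p s), s(v, T.parent v) ∉ totalEdges X' := by
  intro v hv
  have notMem := h.treeEdge_notMem v (mem_pending_insert.1 hv).1
  obtain ⟨hroot, hparent⟩ := mem_pending.1 hv
  by_cases hp : p ∈ s(v, T.parent v)
  · obtain rfl | rfl := Sym2.mem_iff.1 hp
    · rw [Sym2.eq_swap] at notMem ⊢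
      refine fun hmem ↦ notMem (hX'.mem_of_mem_totalEdges (fun hchild ↦ ?_) hmem)
      obtain ⟨hne, hpp⟩ := mem_children.1 hchild
      exact (T.rank_parent_lt hroot).not_gt (by simpa [hpp] using T.rank_parent_lt hne)
    · exact absurd (mem_insert_self _ s) hparent
  · rwa [hX'.mem_totalEdges_iff hp]

lemma count_le_one_insert (e : Sym2 V) (he : ∀ v, T.parent v ≠ v → e ≠ s(v, T.parent v)) :
    (totalEdges X').count e ≤ 1 := by
  by_cases hp : p ∈ e
  · obtain ⟨w, rfl⟩ := Sym2.mem_iff_exists.1 hp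
    rw [Sym2.eq_swap] at he ⊢
    refine (hX'.count_edge_le fun hchild ↦ ?_).trans (h.count_le_one _ he)
    obtain ⟨hne, rfl⟩ := mem_children.1 hchild
    exact he w hne rfl
  · rw [hX'.count_edge_of_notMem e hp]
    exact h.count_le_one e he

lemma newSingles_subset : ∀ e ∈ newSingles T s p X X', e ∈ G.edgeSet := by
  intro e he
  obtain ⟨w, hw, rfl⟩ := mem_image.1 he
  obtain ⟨hwp, hw⟩ := mem_erase.1 hw
  obtain ⟨hw, hw'⟩ := mem_sdiff.1 hw
  obtain ⟨pending, hwX⟩ := mem_idle.1 hw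
  by_cases hchild : w ∈ T.children p
  · exact adj_of_mem_children hchild
  · have hwX' : w ∈ totalEnds X' := by
      by_contra hwX'
      exact hw' (mem_idle.2 ⟨mem_pending_insert.2 ⟨pending, hchild⟩, hwX'⟩)
    exact h.totalEdges_subset _ ((hX'.mem_totalEdges_or_mem_totalEnds_iff hwp hwX).1 (.inr hwX'))

end AnyVertex

variable (hs : ∀ x ∈ s, T.rank p < T.rank x)
include h hs

lemma childEdge_notMem (hw : w ∈ T.children p) : s(w, p) ∉ totalEdges X := by
  have := h.treeEdge_notMem w (children_subset_pending hs hw)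
  rwa [(mem_children.1 hw).2] at this

lemma mem_pending_of_mem_totalEdges (hw : s(w, p) ∈ totalEdges X) :
    w ∈ T.pending (insert p s) := by
  have adj : G.Adj w p := h.totalEdges_subset _ hw
  refine mem_pending_insert.2 ⟨mem_pending.2 ?_, fun hchild ↦ h.childEdge_notMem hs hchild hw⟩
  have not_root : T.parent w ≠ w := fun hroot ↦ by
    have parent_p := T.parent_eq_of_adj hroot adj.symm
    have hp : T.parent p ≠ p := parent_p ▸ adj.ne
    refine h.treeEdge_notMem p (mem_pending_insert.1 (self_mem_pending_insert hs hp)).1 ?_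
    rwa [parent_p, Sym2.eq_swap]
  exact ⟨not_root, fun hmem ↦ (hs _ hmem).not_ge (T.rank_parent_le not_root adj)⟩

lemma count_edge_le_one (w : V) : (totalEdges X).count s(w, p) ≤ 1 := by
  by_cases hw : s(w, p) ∈ totalEdges X
  · refine h.count_le_one _ fun v hv hwv ↦ h.treeEdge_notMem v
      (mem_pending.2 ⟨hv, fun hmem ↦ (hs _ hmem).not_ge ?_⟩) (hwv ▸ hw)
    obtain ⟨-, rfl⟩ | ⟨-, rfl⟩ := Sym2.eq_iff.1 hwv
    exacts [le_rfl, (T.rank_parent_lt hv).le]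
  · simp [Multiset.count_eq_zero.2 hw]

lemma exists_movesEnds_children : ∃ X', MovesEnds p (endSlots X (T.children p)) X X' := by
  refine exists_movesEnds X p _ (fun t ht ↦ ?_) (fun i _ _ ↦ h.two_le_length i)
    (h.count_edge_le_one hs)
  obtain ⟨a, ha, hta⟩ := (mem_filter_univ t).1 ht
  exact ⟨a, hta, (adj_of_mem_children ha).ne, h.childEdge_notMem hs ha⟩

variable (hX' : MovesEnds p (endSlots X (T.children p)) X X')
include hX'

lemma root_or_pending_insert :
    ∀ v ∈ totalEnds X', T.parent v = v ∨ v ∈ T.pending (insert p s) := by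
  refine fun v hv ↦ or_iff_not_imp_left.2 fun hroot ↦ ?_
  obtain rfl | hvp := eq_or_ne v p
  · exact self_mem_pending_insert hs hroot
  by_cases hvX : v ∈ totalEnds X
  · refine mem_pending_insert.2 ⟨(h.root_or_pending v hvX).resolve_left hroot, fun hchild ↦ ?_⟩
    exact hX'.notMem_totalEnds hvp hchild (h.childEdge_notMem hs hchild) hv
  · exact h.mem_pending_of_mem_totalEdges hs
      ((hX'.mem_totalEdges_or_mem_totalEnds_iff hvp hvX).1 (.inr hv))

lemma mem_totalEdges_or_newSingles {e : Sym2 V} (he : e ∈ totalEdges X) :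
    e ∈ totalEdges X' ∨ e ∈ newSingles T s p X X' := by
  by_cases hp : p ∈ e
  · obtain ⟨w, rfl⟩ := Sym2.mem_iff_exists.1 hp
    rw [Sym2.eq_swap] at he ⊢
    have hwp : w ≠ p := SimpleGraph.Adj.ne (h.totalEdges_subset _ he)
    obtain ⟨pending, hchild⟩ := mem_pending_insert.1 (h.mem_pending_of_mem_totalEdges hs he)
    by_cases hw : w ∈ totalEnds X
    · left
      rwa [← Multiset.count_pos, (hX'.count_eq_of_mem_totalEnds hwp hchild hw).1,
        Multiset.count_pos]
    · refine ((hX'.mem_totalEdges_or_mem_totalEnds_iff hwp hw).2 he).imp_right fun hw' ↦ ?_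
      refine mem_image_of_mem _ (mem_erase.2 ⟨hwp, mem_sdiff.2 ⟨mem_idle.2 ⟨pending, hw⟩, ?_⟩⟩)
      exact fun hidle ↦ (mem_idle.1 hidle).2 hw'
  · exact .inl ((hX'.mem_totalEdges_iff hp).2 he)

lemma covered_insert (e : Sym2 V) (he : e ∈ G.edgeSet) :
    e ∈ totalEdges X' ∨ e ∈ E ∪ newSingles T s p X X' ∨
      ∃ v ∈ T.pending (insert p s), e = s(v, T.parent v) := by
  have of_covered (he : e ∈ totalEdges X' ∨ e ∈ newSingles T s p X X') :
      e ∈ totalEdges X' ∨ e ∈ E ∪ newSingles T s p X X' ∨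
        ∃ v ∈ T.pending (insert p s), e = s(v, T.parent v) :=
    he.imp_right fun he ↦ .inl (mem_union_right E he)
  obtain he | he | ⟨v, hv, rfl⟩ := h.covered e he
  · exact of_covered (h.mem_totalEdges_or_newSingles hs hX' he)
  · exact .inr (.inl (mem_union_left _ he))
  · by_cases hchild : v ∈ T.children p
    · obtain ⟨-, rfl⟩ := mem_children.1 hchild
      exact of_covered (childEdge_mem_totalEdges_or_newSingles hX' hs hchild)
    · exact .inr (.inr ⟨v, mem_pending_insert.2 ⟨hv, hchild⟩, rfl⟩)

theorem insert_processed : PartialCover T (insert p s) X' (E ∪ newSingles T s p X X') where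
  two_le_length i := (h.two_le_length i).trans (hX'.length_le i)
  totalEdges_subset := h.totalEdges_subset_insert hX'
  singles_subset e he := (mem_union.1 he).elim (h.singles_subset e) (h.newSingles_subset hX' e)
  root_or_pending := h.root_or_pending_insert hs hX'
  treeEdge_notMem := h.treeEdge_notMem_insert hX'
  count_le_one := h.count_le_one_insert hX'
  covered := h.covered_insert hs hX'
  card_add_card_le := by
    have := h.card_add_card_le
    have := card_union_le E (newSingles T s p X X')
    have := card_newSingles_add_card_idle_le (s := s) hX'
    omega

end PartialCover

end Step

end PartialCover

namespace SearchForest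

variable {G : SimpleGraph V} {α : Type*} [LinearOrder α] (T : SearchForest G α)

/-- The graph of the edges of `G` that are not edges of the forest. -/
def offTree : SimpleGraph V := G.deleteEdges {e | ∃ v, T.parent v ≠ v ∧ e = s(v, T.parent v)}

variable {T}

lemma mem_edgeSet_offTree {e : Sym2 V} :
    e ∈ T.offTree.edgeSet ↔ e ∈ G.edgeSet ∧ ∀ v, T.parent v ≠ v → e ≠ s(v, T.parent v) := by
  simp [offTree]

lemma root_notMem_of_mem_edgeSet_offTree {e : Sym2 V} (he : e ∈ T.offTree.edgeSet) {r : V}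
    (hr : T.parent r = r) : r ∉ e := by
  intro hre
  obtain ⟨w, rfl⟩ := Sym2.mem_iff_exists.1 hre
  obtain ⟨adj, off_tree⟩ := mem_edgeSet_offTree.1 he
  have parent_w := T.parent_eq_of_adj hr (SimpleGraph.Adj.symm adj)
  refine off_tree w ?_ ?_
  · rw [parent_w]
    exact SimpleGraph.Adj.ne adj
  · rw [parent_w, Sym2.eq_swap]

lemma exists_pathSystem_offTree [Fintype V] [DecidableEq V] :
    ∃ (J F : Finset (Sym2 V)) (ι : Type u) (_ : Fintype ι) (X : ι → PathOrCycle V),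
      (∀ e, e ∈ J ∨ e ∈ F ↔ e ∈ T.offTree.edgeSet) ∧ totalEdges X = F.val ∧
      (totalEnds X).Nodup ∧ (∀ r, T.parent r = r → r ∉ totalEnds X) ∧
      Multiset.card (totalEnds X) = 2 * Fintype.card ι ∧
      #J + #{v | v ∉ totalEnds X} ≤ Fintype.card V := by
  classical
  obtain ⟨J, hJ, ι, _, X, edges_eq, ends_eq, card_ends, card_le⟩ :=
    exists_pathSystem_add_forest T.offTree
  refine ⟨J, T.offTree.edgeFinset \ J, ι, inferInstance, X, fun e ↦ ?_, edges_eq,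
    ends_eq ▸ nodup _, fun r hr hmem ↦ ?_, card_ends, by convert card_le⟩
  · rw [← mem_union, union_sdiff_of_subset hJ, SimpleGraph.mem_edgeFinset]
  · rw [ends_eq] at hmem
    obtain ⟨e, he, hre⟩ := edgeDegree_pos.1 ((mem_filter_univ r).1 hmem).pos
    exact root_notMem_of_mem_edgeSet_offTree
      (SimpleGraph.mem_edgeFinset.1 (mem_sdiff.1 he).1) hr hre

end SearchForest

section Existence

open SearchForest

variable [Fintype V] [DecidableEq V] {G : SimpleGraph V} {α : Type*} [LinearOrder α]

theorem exists_partialCover_empty [Nonempty V] (T : SearchForest G α) :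
    ∃ (ι : Type u) (_ : Fintype ι) (X : ι → PathOrCycle V) (E : Finset (Sym2 V)),
      Fintype.card ι ≤ (Fintype.card V - 1) / 2 ∧ PartialCover T ∅ X E := by
  obtain ⟨r, hr⟩ := T.exists_root
  obtain ⟨J, F, ι, _, X, edge_iff, edges_eq, ends_nodup, root_notMem, card_ends, card_le⟩ :=
    T.exists_pathSystem_offTree
  have edge_offTree {e} (he : e ∈ totalEdges X) : e ∈ T.offTree.edgeSet :=
    (edge_iff e).1 (.inr (by rwa [edges_eq] at he))
  have card_ends_le : Multiset.card (totalEnds X) ≤ Fintype.card V - 1 := by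
    rw [← card_univ, ← card_erase_of_mem (mem_univ r)]
    refine Multiset.card_le_card ((Multiset.le_iff_subset ends_nodup).2 fun v hv ↦ ?_)
    exact mem_erase.2 ⟨fun hvr ↦ root_notMem v (hvr ▸ hr) hv, mem_univ v⟩
  have card_idle_lt : #(idle T ∅ X) < #{v | v ∉ totalEnds X} := by
    refine card_lt_card ((ssubset_iff_of_subset fun v hv ↦ ?_).2 ⟨r, ?_, fun hidle ↦ ?_⟩)
    · exact (mem_filter_univ v).2 (mem_idle.1 hv).2
    · exact (mem_filter_univ r).2 (root_notMem r hr)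
    · exact (mem_pending.1 (mem_idle.1 hidle).1).1 hr
  refine ⟨ι, inferInstance, X, J, by omega, ?_⟩
  exact {
    two_le_length i := PathOrCycle.two_le_length_of_nodup_ends
      (Multiset.nodup_of_le (ends_le_totalEnds X i) ends_nodup)
    totalEdges_subset e he := (mem_edgeSet_offTree.1 (edge_offTree he)).1
    singles_subset e he := (mem_edgeSet_offTree.1 ((edge_iff e).1 (.inl he))).1
    root_or_pending v _ := or_iff_not_imp_left.2 fun hv ↦ mem_pending.2 ⟨hv, notMem_empty _⟩
    treeEdge_notMem v hv he :=
      (mem_edgeSet_offTree.1 (edge_offTree he)).2 v (mem_pending.1 hv).1 rfl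
    count_le_one e _ := Multiset.nodup_iff_count_le_one.1 (edges_eq ▸ F.nodup) e
    covered e he := by
      by_cases hoff : ∀ v, T.parent v ≠ v → e ≠ s(v, T.parent v)
      · rw [edges_eq]
        exact ((edge_iff e).2 (mem_edgeSet_offTree.2 ⟨he, hoff⟩)).elim (.inr ∘ .inl) .inl
      · push Not at hoff
        obtain ⟨v, hv, rfl⟩ := hoff
        exact .inr (.inr ⟨v, mem_pending.2 ⟨hv, notMem_empty _⟩, rfl⟩)
    card_add_card_le := by omega }

namespace PartialCover

variable {T : SearchForest G α} {ι : Type u} [Fintype ι] {X : ι → PathOrCycle V}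
  {E : Finset (Sym2 V)}

theorem exists_of_empty (h : PartialCover T ∅ X E) (s : Finset V) :
    ∃ X' : ι → PathOrCycle V, ∃ E', PartialCover T s X' E' := by
  induction s using Finset.induction_on_min_value T.rank with
  | empty => exact ⟨X, E, h⟩
  | insert p s hp p_le ih =>
    obtain ⟨X₁, E₁, h₁⟩ := ih
    have hs x (hx : x ∈ s) : T.rank p < T.rank x :=
      (p_le x hx).lt_of_ne (T.rank_injective.ne (ne_of_mem_of_not_mem hx hp).symm)
    obtain ⟨X', hX'⟩ := h₁.exists_movesEnds_children hs
    exact ⟨X', _, h₁.insert_processed hs hX'⟩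

variable (h : PartialCover T univ X E)
include h

lemma isCycle (i : ι) : (X i).isCycle := by
  by_contra hcycle
  rw [Bool.not_eq_true] at hcycle
  have root {v} (hv : v ∈ (X i).ends) : T.parent v = v :=
    (h.root_or_pending v (Multiset.mem_of_le (ends_le_totalEnds X i) hv)).resolve_right
      fun hpending ↦ (mem_pending.1 hpending).2 (mem_univ _)
  have reachable : G.Reachable ((X i).verts.head (X i).ne_nil)
      ((X i).verts.getLast (X i).ne_nil) :=
    ⟨.ofSupport _ _ (PathOrCycle.isChain_adj fun e he ↦
      h.totalEdges_subset e (mem_totalEdges.2 ⟨i, he⟩))⟩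
  exact PathOrCycle.head_ne_getLast (h.two_le_length i) <|
    T.eq_of_reachable (root (PathOrCycle.head_mem_ends hcycle))
      (root (PathOrCycle.getLast_mem_ends hcycle)) reachable

lemma exists_cycles :
    ∃ c : ι → Σ v : V, G.Walk v v, ∀ i, (c i).2.IsCycle ∧
      ∀ e, e ∈ (c i).2.edges ↔ e ∈ (X i).edges :=
  Classical.axiom_of_choice fun i ↦ PathOrCycle.exists_isCycle_edges_eq
    (fun e he ↦ h.totalEdges_subset e (mem_totalEdges.2 ⟨i, he⟩)) (h.isCycle i)

lemma mem_edgeSet_iff (e : Sym2 V) : e ∈ G.edgeSet ↔ (∃ i, e ∈ (X i).edges) ∨ e ∈ E := by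
  rw [← mem_totalEdges]
  refine ⟨fun he ↦ (h.covered e he).imp_right fun he ↦ he.resolve_right ?_,
    fun he ↦ he.elim (h.totalEdges_subset e) (h.singles_subset e)⟩
  rintro ⟨v, hv, -⟩
  exact (mem_pending.1 hv).2 (mem_univ _)

end PartialCover

end Existence

end CycleEdgeCover


theorem stmt_13_general {V : Type*} [Fintype V] (G : SimpleGraph V) :
    ∃ (C : List (Σ v : V, G.Walk v v)) (E : List (Sym2 V)),
      C.length ≤ (Fintype.card V - 1) / 2 ∧ E.length ≤ Fintype.card V - 1 ∧
      (∀ c ∈ C, c.2.IsCycle) ∧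
      (∀ e ∈ E, e ∈ G.edgeSet) ∧
      (∀ e : Sym2 V, e ∈ G.edgeSet ↔ (∃ c ∈ C, e ∈ c.2.edges) ∨ e ∈ E) := by
  classical
  cases isEmpty_or_nonempty V
  · exact ⟨[], [], by simp, by simp, by simp, by simp, fun e ↦ isEmptyElim e⟩
  obtain ⟨T⟩ := CycleEdgeCover.SearchForest.nonempty_searchForest G
  obtain ⟨ι, _, X₀, E₀, card_le, h₀⟩ := CycleEdgeCover.exists_partialCover_empty T
  obtain ⟨X, E, h⟩ := h₀.exists_of_empty univ
  obtain ⟨c, hc⟩ := h.exists_cycles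
  refine ⟨univ.toList.map c, E.toList, ?_, ?_, ?_, ?_, fun e ↦ ?_⟩
  · simpa using card_le
  · simpa using (Nat.le_add_right _ _).trans h.card_add_card_le
  · simpa using fun i ↦ (hc i).1
  · simpa using h.singles_subset
  · simpa [(hc _).2] using h.mem_edgeSet_iff e

/-- Pyber: every simple graph on n vertices with no cycle of
length 4 can be covered by at most ⌊(n−1)/2⌋ cycles together with at most
n − 1 single edges. -/
theorem stmt_13 (n : ℕ) (G : SimpleGraph (Fin n))
    (hC4 : ∀ (v : Fin n) (w : G.Walk v v), w.IsCycle → w.length ≠ 4) :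
    ∃ (C : List (Σ v : Fin n, G.Walk v v)) (E : List (Sym2 (Fin n))),
      C.length ≤ (n - 1) / 2 ∧ E.length ≤ n - 1 ∧
      (∀ c ∈ C, c.2.IsCycle) ∧
      (∀ e ∈ E, e ∈ G.edgeSet) ∧
      (∀ e : Sym2 (Fin n), e ∈ G.edgeSet ↔ (∃ c ∈ C, e ∈ c.2.edges) ∨ e ∈ E) := by
  simpa using stmt_13_general G
end
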